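/- Let Ω be a bounded open convex set in ℝ² containing the origin in its interior. Assume ∂Ω is C¹ and, in an arclength parametrization, the components of the unit tangent vector are absolutely continuous, so the curvature κ is defined almost everywhere as an L¹ function on ∂Ω. Assume there are a > 0 and γ > 0 with κ(x) ≥ a for almost every x ∈ ∂Ω and ∫_{∂Ω} κ (log(2+κ))^{γ} dσ < ∞ (i.e. κ ∈ L log^γ L(∂Ω)). Let Ω* = {ξ ∈ ℝ² : ρ*(ξ) ≤ 1} be the polar set and E_{Ω*}(t) = card(tΩ* ∩ ℤ²) − t²·area(Ω*). Then there is a constant C such that |E_{Ω*}(t)| ≤ C t (log t)^{−γ/2} for all t ≥ 2. -/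

import Mathlib

/-!
The dilate `t • Ω*` is the sublevel set `ρ* ≤ t` of the support function. The lower bound on the
curvature makes `Ω` uniformly convex. Dually, near a point `x` with outer direction `n s` the
function `ρ*` differs from the linear function `⟪γ s, ·⟫` by a quadratic error
`O(‖y - x‖ ^ 2 / ‖x‖)`. So, in a box of side `N ^ 6` with `N ≈ t ^ (1 / 13)` that meets the boundary
of `t • Ω*`, this set is a half-plane with normal `γ s` up to a strip of width `O(1 / N)`.

Tile the plane by such boxes. Boxes inside or outside `t • Ω*` contribute nothing to the lattice
rest. In a boundary box the lattice points are counted column by column, which leaves a sum of terms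
`1 / 2 - fract (c - θ k)`, with `θ` the slope of the half-plane. If `θ` has a Dirichlet
approximation whose denominator is between `N` and `N ^ 5`, this sum is `O(N ^ 5)`; in any case it
is `O(N ^ 6)`. Such an approximation exists unless `γ s` is nearly rational, that is, almost
orthogonal to a nonzero integer vector with entries at most `N`.

It remains to count boxes. The normal direction of the boundary of `t • Ω*` runs through the points
`γ s`, while its points have directions `n s`, and the variation of `n` over an arc is at most the
total curvature of this arc. Hence the number of boundary boxes belonging to a union of parameter
arcs is at most about `t / N ^ 6` times its total curvature, plus the number of arcs. Two normals
almost orthogonal to the same integer vector are almost parallel, so the nearly rational normals lie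
in only `O(N ^ 2)` of the `N ^ 5` equal cells of the parameter interval. Truncating the curvature at
height `N` and using the `L log ^ g L` hypothesis, the total curvature of these cells is
`O(N ^ (-2) + log (2 + N) ^ (-g))`. Summation gives `|E(t)| ≤ C t (1 / N + log (2 + N) ^ (-g))`,
which is of order `t (log t) ^ (-g)`.
-/

open MeasureTheory Set
open scoped Pointwise RealInnerProductSpace NNReal ENNReal

noncomputable section

abbrev E2 := EuclideanSpace ℝ (Fin 2)

/-- The embedding of an integer vector into the Euclidean plane. -/
def ek (k : Fin 2 → ℤ) : E2 := (WithLp.equiv 2 (Fin 2 → ℝ)).symm fun i => (k i : ℝ)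

/-- Number of lattice points in a set. -/
def latticeCount (S : Set E2) : ℕ := Nat.card {k : Fin 2 → ℤ | ek k ∈ S}

/-- The lattice rest `E_Ω(t) = card(tΩ ∩ ℤ²) − t²·area(Ω)`. -/
def latticeRest (Ω : Set E2) (t : ℝ) : ℝ :=
  (latticeCount (t • Ω) : ℝ) - t ^ 2 * (volume Ω).toReal

/-- The mean square discrepancy `𝒢_Ω(R,h) = ((1/h)∫_R^{R+h} |E_Ω(t)|² dt)^{1/2}`. -/
def meanSquare (Ω : Set E2) (R h : ℝ) : ℝ :=
  Real.sqrt ((1 / h) * ∫ t in R..(R + h), (latticeRest Ω t) ^ 2)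

/-- The support function `ρ*(ξ) = sup {⟨x,ξ⟩ : x ∈ Ω}`. -/
def suppFn (Ω : Set E2) (ξ : E2) : ℝ := sSup ((fun x => ⟪x, ξ⟫) '' Ω)

/-- `μ(θ,δ)`, the diameter of the cap `𝒞(θ,δ) = {x ∈ ∂Ω : ⟨x,θ⟩ ≥ ρ*(θ) − δ}`. -/
def capDiam (Ω : Set E2) (θ : E2) (δ : ℝ) : ℝ :=
  Metric.diam {x ∈ frontier Ω | suppFn Ω θ - δ ≤ ⟪x, θ⟫}

/-- Curvature bounded below in the generalized sense:
`sup_{θ∈S¹} sup_{δ>0} δ^{-1/2} μ(θ,δ) < ∞`. -/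
def CurvBddBelow (Ω : Set E2) : Prop :=
  ∃ K : ℝ, ∀ θ : E2, ‖θ‖ = 1 → ∀ δ : ℝ, 0 < δ → capDiam Ω θ δ ≤ K * Real.sqrt δ

/-- `γ` is an arclength (unit-speed) parametrization of the `C¹` boundary `∂Ω`, with
period `L`, whose unit tangent vector `γ'` is absolutely continuous with almost-everywhere
derivative `γ''`; the curvature is then `κ = ‖γ''‖`, defined a.e. as an `L¹` function. -/
def BoundaryParam (Ω : Set E2) (γ γ' γ'' : ℝ → E2) (L : ℝ) : Prop :=
  0 < L ∧ (∀ t, HasDerivAt γ (γ' t) t) ∧ Continuous γ' ∧ (∀ t, ‖γ' t‖ = 1) ∧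
    Function.Periodic γ L ∧ γ '' Set.Ico 0 L = frontier Ω ∧ Set.InjOn γ (Set.Ico 0 L) ∧
    (∀ t : ℝ, IntervalIntegrable γ'' volume 0 t) ∧
    (∀ t : ℝ, γ' t = γ' 0 + ∫ s in (0:ℝ)..t, γ'' s)

/-- The polar set `Ω* = {ξ : ρ*(ξ) ≤ 1}`. -/
def polarSet (Ω : Set E2) : Set E2 := {ξ | suppFn Ω ξ ≤ 1}

/-! ### Sums of fractional parts -/

lemma sum_range_emod_sub_mul {M : Type*} [AddCommMonoid M] {p : ℤ} {q : ℕ} (hq : 0 < q)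
    (hpq : IsCoprime p (q : ℤ)) (m : ℤ) (f : ℕ → M) :
    ∑ k ∈ Finset.range q, f ((m - p * k) % (q : ℤ)).toNat = ∑ k ∈ Finset.range q, f k := by
  have hqz : (0 : ℤ) < q := by exact_mod_cast hq
  have hmaps : ∀ k ∈ Finset.range q, ((m - p * k) % (q : ℤ)).toNat ∈ Finset.range q := by
    intro k _
    have := Int.emod_lt_of_pos (m - p * k) hqz
    rw [Finset.mem_range]
    omega
  have hinj : InjOn (fun k : ℕ => ((m - p * k) % (q : ℤ)).toNat) (Finset.range q) := by
    intro k hk l hl hkl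
    have hmod : (m - p * l) % (q : ℤ) = (m - p * k) % (q : ℤ) := by
      have hk0 := Int.emod_nonneg (m - p * k) hqz.ne'
      have hl0 := Int.emod_nonneg (m - p * l) hqz.ne'
      simp only at hkl
      omega
    have hdvd : (q : ℤ) ∣ p * ((l : ℤ) - k) := by
      convert Int.ModEq.dvd hmod using 1
      ring
    have := Int.eq_zero_of_abs_lt_dvd (hpq.symm.dvd_of_dvd_mul_left hdvd) (by
      simp only [Finset.coe_range, mem_Iio] at hk hl
      rw [abs_lt]
      omega)
    omega
  exact Finset.sum_nbij _ hmaps hinj (Finset.surjOn_of_injOn_of_card_le _ hmaps hinj le_rfl)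
    fun _ _ => rfl

lemma sum_half_sub_natCast_div {K : Type*} [Field K] [CharZero K] {q : ℕ} (hq : 0 < q) :
    ∑ k ∈ Finset.range q, (1 / 2 - (k : K) / q) = 1 / 2 := by
  have hq0 : (q : K) ≠ 0 := by exact_mod_cast hq.ne'
  have hgauss : (∑ k ∈ Finset.range q, (k : K)) * 2 = q * (q - 1) := by
    rw [← Nat.cast_pred hq, ← Nat.cast_sum]
    exact_mod_cast congrArg (Nat.cast : ℕ → K) (Finset.sum_range_id_mul_two q)
  rw [Finset.sum_sub_distrib, ← Finset.sum_div (Finset.range q) fun k : ℕ => (k : K),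
    Finset.sum_const, Finset.card_range, nsmul_eq_mul]
  field_simp
  linear_combination -hgauss

section FractionalParts

variable {𝕜 : Type*} [Field 𝕜] [LinearOrder 𝕜] [IsStrictOrderedRing 𝕜] [FloorRing 𝕜]

lemma abs_half_sub_fract_le (x : 𝕜) : |1 / 2 - Int.fract x| ≤ 1 / 2 := by
  rw [abs_le]
  constructor <;> linarith [Int.fract_nonneg x, Int.fract_lt_one x]

-- The residues `0` and `q - 1` are the ones at which the perturbation `e` may cross an integer.
lemma abs_natCast_div_sub_fract_add_le {q r : ℕ} (hr : r < q) {e : 𝕜} (he : -(1 / q) ≤ e)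
    (he' : e < 2 / q) :
    |(r : 𝕜) / q - Int.fract ((r : 𝕜) / q + e)| ≤
      2 / q + ((if r = 0 then 1 else 0) + if r = q - 1 then 1 else 0) := by
  have hq : (0 : 𝕜) < q := by exact_mod_cast r.zero_le.trans_lt hr
  have hone : 0 < 1 / (q : 𝕜) := by positivity
  have htwo : 2 / (q : 𝕜) = 2 * (1 / q) := by ring
  have hle_one : |(r : 𝕜) / q - Int.fract ((r : 𝕜) / q + e)| ≤ 1 := by
    have : (r : 𝕜) / q ≤ 1 := (div_le_one hq).2 (by exact_mod_cast hr.le)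
    have : 0 ≤ (r : 𝕜) / q := by positivity
    rw [abs_le]
    constructor <;>
      linarith [Int.fract_nonneg ((r : 𝕜) / q + e), Int.fract_lt_one ((r : 𝕜) / q + e)]
  rcases eq_or_ne r 0 with hr0 | hr0
  · rw [if_pos hr0]
    have : (0 : 𝕜) ≤ if r = q - 1 then 1 else 0 := by split_ifs <;> norm_num
    linarith
  rcases eq_or_ne r (q - 1) with hr1 | hr1
  · rw [if_neg hr0, if_pos hr1]
    linarith
  have hlow : 1 / (q : 𝕜) ≤ r / q := by
    gcongr
    exact_mod_cast Nat.one_le_iff_ne_zero.2 hr0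
  have hhigh : (r : 𝕜) / q + 2 / q ≤ 1 := by
    rw [← add_div, div_le_one hq]
    exact_mod_cast (by omega : r + 2 ≤ q)
  rw [if_neg hr0, if_neg hr1, Int.fract_eq_self.2 ⟨by linarith, by linarith⟩, abs_le]
  constructor <;> linarith

lemma abs_emod_div_sub_fract_le (c : 𝕜) {θ : 𝕜} {p : ℤ} {q k r : ℕ} (hk : k < q)
    (hr : (r : ℤ) = (⌊c * q⌋ - p * k) % (q : ℤ)) (hθ : |θ - p / q| ≤ 1 / (q : 𝕜) ^ 2) :
    |(r : 𝕜) / q - Int.fract (c - θ * k)| ≤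
      2 / q + ((if r = 0 then 1 else 0) + if r = q - 1 then 1 else 0) := by
  have hq : 0 < q := k.zero_le.trans_lt hk
  have hq0 : (0 : 𝕜) < q := by exact_mod_cast hq
  have hrq : r < q := by
    have := Int.emod_lt_of_pos (⌊c * q⌋ - p * k) (by exact_mod_cast hq : (0 : ℤ) < q)
    omega
  set w := (⌊c * q⌋ - p * k) / (q : ℤ)
  have hdiv : (⌊c * q⌋ : 𝕜) - p * k = r + q * w := by
    exact_mod_cast (hr ▸ (Int.emod_add_mul_ediv _ _).symm : ⌊c * q⌋ - p * k = r + q * w)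
  have hdecomp : c - θ * k = r / q + (Int.fract (c * q) / q - (θ - p / q) * k) + w := by
    field_simp
    linear_combination (-1 : 𝕜) * Int.floor_add_fract (c * (q : 𝕜)) + hdiv
  have hslope : |(θ - p / q) * k| ≤ 1 / q := by
    rw [abs_mul, Nat.abs_cast]
    have : (k : 𝕜) ≤ q := by exact_mod_cast hk.le
    calc |θ - p / q| * k ≤ 1 / (q : 𝕜) ^ 2 * q := by gcongr
      _ = 1 / q := by field_simp
  have hfract : Int.fract (c * q) / (q : 𝕜) < 1 / q := by
    gcongr
    exact Int.fract_lt_one _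
  have hfract0 : 0 ≤ Int.fract (c * q) / (q : 𝕜) := div_nonneg (Int.fract_nonneg _) hq0.le
  rw [abs_le] at hslope
  rw [hdecomp, Int.fract_add_intCast]
  refine abs_natCast_div_sub_fract_add_le hrq (by linarith) ?_
  rw [show 2 / (q : 𝕜) = 1 / q + 1 / q by ring]
  linarith

lemma abs_sum_half_sub_fract_period_le (c : 𝕜) {θ : 𝕜} {p : ℤ} {q : ℕ} (hq : 0 < q)
    (hpq : IsCoprime p (q : ℤ)) (hθ : |θ - p / q| ≤ 1 / (q : 𝕜) ^ 2) :
    |∑ k ∈ Finset.range q, (1 / 2 - Int.fract (c - θ * k))| ≤ 6 := by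
  have hq0 : (0 : 𝕜) < q := by exact_mod_cast hq
  let r : ℕ → ℕ := fun k => ((⌊c * q⌋ - p * k) % (q : ℤ)).toNat
  have hr (k : ℕ) : (r k : ℤ) = (⌊c * q⌋ - p * k) % (q : ℤ) :=
    Int.toNat_of_nonneg (Int.emod_nonneg _ (by exact_mod_cast hq.ne'))
  have hperm (f : ℕ → 𝕜) : ∑ k ∈ Finset.range q, f (r k) = ∑ k ∈ Finset.range q, f k :=
    sum_range_emod_sub_mul hq hpq _ f
  have herror : |∑ k ∈ Finset.range q, ((r k : 𝕜) / q - Int.fract (c - θ * k))| ≤ 4 := by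
    refine (Finset.abs_sum_le_sum_abs _ _).trans ((Finset.sum_le_sum fun k hk =>
      abs_emod_div_sub_fract_le c (Finset.mem_range.1 hk) (hr k) hθ).trans ?_)
    rw [hperm fun k => 2 / (q : 𝕜) + ((if k = 0 then 1 else 0) + if k = q - 1 then 1 else 0)]
    simp only [Finset.sum_add_distrib, Finset.sum_const, Finset.card_range, nsmul_eq_mul,
      Finset.sum_ite_eq', Finset.mem_range, if_pos hq, if_pos (Nat.sub_lt hq one_pos)]
    rw [mul_div_cancel₀ _ hq0.ne']
    norm_num
  have hmain : ∑ k ∈ Finset.range q, (1 / 2 - (r k : 𝕜) / q) = 1 / 2 :=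
    (hperm fun k => 1 / 2 - (k : 𝕜) / q).trans (sum_half_sub_natCast_div hq)
  have hsplit : ∑ k ∈ Finset.range q, (1 / 2 - Int.fract (c - θ * k)) =
      1 / 2 + ∑ k ∈ Finset.range q, ((r k : 𝕜) / q - Int.fract (c - θ * k)) := by
    rw [← sub_eq_iff_eq_add, ← Finset.sum_sub_distrib]
    exact (Finset.sum_congr rfl fun _ _ => by ring).trans hmain
  rw [hsplit]
  rw [abs_le] at herror ⊢
  constructor <;> linarith

lemma abs_sum_half_sub_fract_le {θ : 𝕜} {p : ℤ} {q : ℕ} (hq : 0 < q) (hpq : IsCoprime p (q : ℤ))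
    (hθ : |θ - p / q| ≤ 1 / (q : 𝕜) ^ 2) (n : ℕ) (c : 𝕜) :
    |∑ k ∈ Finset.range n, (1 / 2 - Int.fract (c - θ * k))| ≤ 6 * (n / q) + q := by
  have hq0 : (0 : 𝕜) < q := by exact_mod_cast hq
  induction n using Nat.strong_induction_on generalizing c with
  | _ n ih =>
    rcases lt_or_ge n q with hn | hn
    · have hterms : |∑ k ∈ Finset.range n, (1 / 2 - Int.fract (c - θ * k))| ≤ n * (1 / 2) := by
        refine (Finset.abs_sum_le_sum_abs _ _).trans ?_
        refine (Finset.sum_le_card_nsmul _ _ _ fun k _ => abs_half_sub_fract_le _).trans ?_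
        rw [Finset.card_range, nsmul_eq_mul]
      have : (n : 𝕜) ≤ q := by exact_mod_cast hn.le
      have : 0 ≤ (n : 𝕜) / q := by positivity
      linarith
    · obtain ⟨m, rfl⟩ := Nat.exists_eq_add_of_le hn
      have hshift : ∀ k : ℕ, c - θ * ((q + k : ℕ) : 𝕜) = c - θ * q - θ * k := by
        intro k
        push_cast
        ring
      have hlen : ((q + m : ℕ) : 𝕜) / q = 1 + m / q := by
        push_cast
        field_simp
      rw [Finset.sum_range_add, hlen]
      simp only [hshift]
      refine (abs_add_le _ _).trans ?_
      linarith [abs_sum_half_sub_fract_period_le c hq hpq hθ, ih m (by omega) (c - θ * q)]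

lemma one_div_two_mul_le_abs_of_isCoprime {θ : 𝕜} {p : ℤ} {q : ℕ} (hq : 2 ≤ q)
    (hpq : IsCoprime p (q : ℤ)) (hθ : |θ - p / q| ≤ 1 / (q : 𝕜) ^ 2) :
    1 / (2 * (q : 𝕜)) ≤ |θ| := by
  have hq2 : (2 : 𝕜) ≤ q := by exact_mod_cast hq
  have hp : p ≠ 0 := by
    rintro rfl
    rw [isCoprime_zero_left, Int.isUnit_iff] at hpq
    omega
  have hfrac : 1 / (q : 𝕜) ≤ |(p : 𝕜) / q| := by
    rw [abs_div, Nat.abs_cast]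
    gcongr
    exact_mod_cast Int.one_le_abs hp
  have hsquare : 1 / (q : 𝕜) ^ 2 ≤ 1 / (2 * q) := by
    apply one_div_le_one_div_of_le (by positivity)
    nlinarith
  have hhalf : 1 / (q : 𝕜) = 1 / (2 * q) + 1 / (2 * q) := by
    field_simp
    norm_num
  have := abs_sub_abs_le_abs_sub ((p : 𝕜) / q) θ
  rw [abs_sub_comm] at this
  linarith

end FractionalParts

/-! ### Columns of a half-plane in a box -/

lemma card_le_of_forall_le_add {α : Type*} {S : Finset α} {f : α → ℤ} (hf : InjOn f S) {D : ℕ}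
    (h : ∀ a ∈ S, ∀ b ∈ S, f b ≤ f a + D) : S.card ≤ D + 1 := by
  rcases S.eq_empty_or_nonempty with rfl | hS
  · exact Nat.zero_le _
  obtain ⟨a, ha, hmin⟩ := S.exists_min_image f hS
  have hmaps : MapsTo f S (Finset.Icc (f a) (f a + D)) := fun b hb =>
    Finset.mem_coe.2 (Finset.mem_Icc.2 ⟨hmin b hb, h a ha b hb⟩)
  refine (Finset.card_le_card_of_injOn f hmaps hf).trans (le_of_eq ?_)
  rw [Int.card_Icc]
  omega

lemma exists_eq_Ico_of_ordConnected {S : Finset ℕ} (hS : (S : Set ℕ).OrdConnected) :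
    ∃ a b, S = Finset.Ico a b := by
  rcases S.eq_empty_or_nonempty with rfl | hne
  · exact ⟨0, 0, rfl⟩
  refine ⟨S.min' hne, S.max' hne + 1, ?_⟩
  ext k
  rw [Finset.mem_Ico, Nat.lt_succ_iff]
  exact ⟨fun hk => ⟨S.min'_le k hk, S.le_max' k hk⟩,
    fun hk => hS.out (S.min'_mem hne) (S.max'_mem hne) hk⟩

/-- Number of lattice points at height at most `u` in the column over an integer of a box whose
lattice points have heights `0, …, H - 1`. -/
def columnCount (H : ℕ) (u : ℝ) : ℕ := ((Finset.range H).filter fun l : ℕ => (l : ℝ) ≤ u).card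

/-- Length of the part below height `u` of the column `[-1/2, H - 1/2)`, in which the unit cell of
each lattice point is centred at this point. -/
def columnLength (H : ℕ) (u : ℝ) : ℝ := max 0 (min (u + 1 / 2) H)

/-- Lattice points minus area in a column of unit width, for the region below the line of slope `-θ`
which has height `u` at the centre of the column. -/
def columnError (H : ℕ) (θ u : ℝ) : ℝ :=
  columnCount H u - ∫ x in (-1 / 2 : ℝ)..1 / 2, columnLength H (u - θ * x)

section Columns

variable {H : ℕ} {θ u : ℝ}

lemma abs_columnLength_sub_le (H : ℕ) (u v : ℝ) :
    |columnLength H u - columnLength H v| ≤ |u - v| := by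
  have hmax := abs_max_sub_max_le_abs (min (u + 1 / 2) (H : ℝ)) (min (v + 1 / 2) (H : ℝ)) 0
  have hmin := abs_inf_sub_inf_le_abs (u + 1 / 2) (v + 1 / 2) (H : ℝ)
  rw [max_comm _ 0, max_comm _ 0] at hmax
  exact hmax.trans (hmin.trans_eq (by rw [add_sub_add_right_eq_sub]))

lemma continuous_columnLength (H : ℕ) : Continuous (columnLength H) := by
  unfold columnLength
  fun_prop

lemma intervalIntegrable_columnLength (H : ℕ) (c θ a b : ℝ) :
    IntervalIntegrable (fun x => columnLength H (c - θ * x)) volume a b :=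
  ((continuous_columnLength H).comp (by fun_prop)).intervalIntegrable _ _

lemma columnCount_of_neg (h : u < 0) : columnCount H u = 0 := by
  rw [columnCount, Finset.card_eq_zero, Finset.filter_eq_empty_iff]
  exact fun l _ hl => (hl.trans_lt h).not_ge l.cast_nonneg

lemma columnCount_of_sub_one_le (h : (H : ℝ) - 1 ≤ u) : columnCount H u = H := by
  rw [columnCount, Finset.filter_true_of_mem, Finset.card_range]
  intro l hl
  have : (l : ℝ) + 1 ≤ H := by exact_mod_cast Finset.mem_range.1 hl
  linarith

lemma columnCount_of_lt (h0 : 0 ≤ u) (h : u < H) : columnCount H u = ⌊u⌋₊ + 1 := by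
  rw [columnCount, ← Finset.card_range (⌊u⌋₊ + 1)]
  congr 1
  ext l
  simp only [Finset.mem_filter, Finset.mem_range, Nat.lt_succ_iff, Nat.le_floor_iff h0]
  exact ⟨And.right, fun hl => ⟨by exact_mod_cast hl.trans_lt h, hl⟩⟩

lemma abs_columnCount_sub_columnLength_le (H : ℕ) (u : ℝ) :
    |(columnCount H u : ℝ) - columnLength H u| ≤ 1 := by
  have hH : (0 : ℝ) ≤ H := H.cast_nonneg
  rcases lt_or_ge u 0 with hu | hu
  · have hnonneg : 0 ≤ columnLength H u := le_max_left _ _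
    have hle : columnLength H u ≤ 1 :=
      max_le zero_le_one ((min_le_left _ _).trans (by linarith))
    rw [columnCount_of_neg hu, Nat.cast_zero, zero_sub, abs_neg, abs_of_nonneg hnonneg]
    exact hle
  rcases lt_or_ge u H with huH | huH
  · have hle : columnLength H u ≤ u + 1 / 2 := max_le (by linarith) (min_le_left _ _)
    have hge : u ≤ columnLength H u := le_max_of_le_right (le_min (by linarith) huH.le)
    rw [columnCount_of_lt hu huH, abs_le]
    push_cast
    constructor <;> linarith [Nat.floor_le hu, Nat.lt_floor_add_one u]
  · rw [columnCount_of_sub_one_le (by linarith), columnLength, min_eq_right (by linarith),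
      max_eq_right hH, sub_self, abs_zero]
    exact zero_le_one

lemma abs_mul_le_half {x : ℝ} (hθ : |θ| ≤ 1) (hx : x ∈ uIcc (-1 / 2 : ℝ) (1 / 2)) :
    |θ * x| ≤ 1 / 2 := by
  rw [uIcc_of_le (by norm_num)] at hx
  have : |x| ≤ 1 / 2 := abs_le.2 ⟨by linarith [hx.1], hx.2⟩
  calc |θ * x| = |θ| * |x| := abs_mul _ _
    _ ≤ 1 * (1 / 2) := by gcongr
    _ = 1 / 2 := one_mul _

lemma abs_columnError_le (H : ℕ) (hθ : |θ| ≤ 1) (u : ℝ) : |columnError H θ u| ≤ 2 := by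
  have hcentre : ‖∫ x in (-1 / 2 : ℝ)..1 / 2, (columnLength H (u - θ * x) - columnLength H u)‖ ≤
      1 / 2 * |(1 / 2 : ℝ) - -1 / 2| := by
    refine intervalIntegral.norm_integral_le_of_norm_le_const fun x hx => ?_
    refine (abs_columnLength_sub_le H _ _).trans ?_
    rw [sub_sub_cancel_left, abs_neg]
    exact abs_mul_le_half hθ (uIoc_subset_uIcc hx)
  rw [intervalIntegral.integral_sub (intervalIntegrable_columnLength _ _ _ _ _) (by simp),
    intervalIntegral.integral_const, Real.norm_eq_abs] at hcentre
  norm_num at hcentre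
  have hcount := abs_columnCount_sub_columnLength_le H u
  rw [columnError]
  norm_num
  rw [abs_le] at *
  constructor <;> linarith

lemma columnError_of_lt_neg_one (hθ : |θ| ≤ 1) (hu : u < -1) : columnError H θ u = 0 := by
  have hlength : EqOn (fun x => columnLength H (u - θ * x)) (fun _ => 0)
      (uIcc (-1 / 2 : ℝ) (1 / 2)) := by
    intro x hx
    have := abs_le.1 (abs_mul_le_half hθ hx)
    exact max_eq_left ((min_le_left _ _).trans (by linarith))
  rw [columnError, columnCount_of_neg (by linarith), intervalIntegral.integral_congr hlength]
  simp

lemma columnError_of_natCast_lt (hθ : |θ| ≤ 1) (hu : H < u) : columnError H θ u = 0 := by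
  have hlength : EqOn (fun x => columnLength H (u - θ * x)) (fun _ => (H : ℝ))
      (uIcc (-1 / 2 : ℝ) (1 / 2)) := by
    intro x hx
    have := abs_le.1 (abs_mul_le_half hθ hx)
    change max 0 (min (u - θ * x + 1 / 2) (H : ℝ)) = H
    rw [min_eq_right (by linarith), max_eq_right H.cast_nonneg]
  rw [columnError, columnCount_of_sub_one_le (by linarith),
    intervalIntegral.integral_congr hlength, intervalIntegral.integral_const]
  norm_num

lemma columnError_of_mem_Icc (hθ : |θ| ≤ 1) (hu : u ∈ Icc (1 : ℝ) (H - 2)) :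
    columnError H θ u = 1 / 2 - Int.fract u := by
  obtain ⟨hu1, huH⟩ := hu
  have hlength : EqOn (fun x => columnLength H (u - θ * x)) (fun x => u + 1 / 2 - θ * x)
      (uIcc (-1 / 2 : ℝ) (1 / 2)) := by
    intro x hx
    have := abs_le.1 (abs_mul_le_half hθ hx)
    change max 0 (min (u - θ * x + 1 / 2) (H : ℝ)) = u + 1 / 2 - θ * x
    rw [min_eq_left (by linarith), max_eq_right (by linarith)]
    ring
  have hintegral : ∫ x in (-1 / 2 : ℝ)..1 / 2, (u + 1 / 2 - θ * x) = u + 1 / 2 := by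
    rw [intervalIntegral.integral_sub (by simp)
        (Continuous.intervalIntegrable (by fun_prop) _ _), intervalIntegral.integral_const_mul,
      integral_id, intervalIntegral.integral_const]
    norm_num
  have hfloor : ((⌊u⌋₊ : ℕ) : ℝ) = ⌊u⌋ := natCast_floor_eq_intCast_floor (by linarith)
  rw [columnError, columnCount_of_lt (by linarith) (by linarith),
    intervalIntegral.integral_congr hlength, hintegral, Nat.cast_add, Nat.cast_one, hfloor]
  linarith [Int.floor_add_fract u]

lemma abs_sub_le_one_or_of_columnError_ne_zero (hθ : |θ| ≤ 1) (hne : columnError H θ u ≠ 0)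
    (hu : u ∉ Icc (1 : ℝ) (H - 2)) : |u - 0| ≤ 1 ∨ |u - (H - 1)| ≤ 1 := by
  have hlow := not_lt.1 (mt (columnError_of_lt_neg_one hθ) hne)
  have hhigh := not_lt.1 (mt (columnError_of_natCast_lt hθ) hne)
  rw [abs_le, abs_le]
  rcases le_or_gt 1 u with h1 | h1
  · have : H - 2 < u := not_le.1 fun h2 => hu ⟨h1, h2⟩
    exact Or.inr ⟨by linarith, by linarith⟩
  · exact Or.inl ⟨by linarith, by linarith⟩

lemma sum_columnError (H : ℕ) (c θ : ℝ) :
    ∑ k ∈ Finset.range H, columnError H θ (c - θ * k) =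
      ∑ k ∈ Finset.range H, (columnCount H (c - θ * k) : ℝ) -
        ∫ x in (-1 / 2 : ℝ)..(H - 1 / 2), columnLength H (c - θ * x) := by
  have hadd := intervalIntegral.sum_integral_adjacent_intervals (μ := volume)
    (f := fun x => columnLength H (c - θ * x)) (a := fun k : ℕ => (k : ℝ) - 1 / 2) (n := H)
    fun k _ => intervalIntegrable_columnLength _ _ _ _ _
  simp only [columnError, Finset.sum_sub_distrib]
  rw [show (-1 / 2 : ℝ) = ((0 : ℕ) : ℝ) - 1 / 2 by norm_num, ← hadd]
  congr 1
  refine Finset.sum_congr rfl fun k _ => ?_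
  have hshift := intervalIntegral.integral_comp_add_right
    (fun x => columnLength H (c - θ * x)) (k : ℝ) (a := -1 / 2) (b := 1 / 2)
  rw [show -1 / 2 + (k : ℝ) = k - 1 / 2 by ring, show 1 / 2 + (k : ℝ) = k + 1 - 1 / 2 by ring]
    at hshift
  push_cast
  rw [← hshift, zero_sub, neg_div]
  exact intervalIntegral.integral_congr fun x _ => congrArg _ (by ring)

lemma abs_sum_columnError_le (H : ℕ) (c : ℝ) (hθ : |θ| ≤ 1) :
    |∑ k ∈ Finset.range H, columnError H θ (c - θ * k)| ≤ 2 * H := by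
  refine (Finset.abs_sum_le_sum_abs _ _).trans ?_
  refine (Finset.sum_le_card_nsmul _ _ 2 fun k _ => abs_columnError_le H hθ _).trans ?_
  rw [Finset.card_range, nsmul_eq_mul, mul_comm]

lemma card_le_of_abs_sub_mul_sub_le_one {c w : ℝ} {q : ℕ} (hq : 0 < q)
    (hθ : 1 / (2 * (q : ℝ)) ≤ |θ|) {S : Finset ℕ} (hS : ∀ k ∈ S, |c - θ * k - w| ≤ 1) :
    S.card ≤ 4 * q + 1 := by
  have : (0 : ℝ) < q := by exact_mod_cast hq
  refine card_le_of_forall_le_add (f := Nat.cast) Nat.cast_injective.injOn fun a ha b hb => ?_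
  have hdiff : |θ| * |(b : ℝ) - a| ≤ 2 := by
    have ha' := abs_le.1 (hS a ha)
    have hb' := abs_le.1 (hS b hb)
    rw [← abs_mul, abs_le]
    constructor <;> linarith
  have hslope : 1 / (2 * (q : ℝ)) * |(b : ℝ) - a| ≤ 2 := le_trans (by gcongr) hdiff
  rw [div_mul_eq_mul_div, div_le_iff₀ (by positivity)] at hslope
  have : (b : ℝ) ≤ a + 4 * q := by linarith [le_abs_self ((b : ℝ) - a)]
  exact_mod_cast this

lemma abs_sum_filter_half_sub_fract_le {p : ℤ} {q : ℕ} (hq : 0 < q) (hpq : IsCoprime p (q : ℤ))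
    (hθ : |θ - p / q| ≤ 1 / (q : ℝ) ^ 2) (n : ℕ) (c : ℝ) {I : Set ℝ} (hI : I.OrdConnected)
    [DecidablePred (· ∈ I)] :
    |∑ k ∈ (Finset.range n).filter fun k : ℕ => c - θ * k ∈ I, (1 / 2 - Int.fract (c - θ * k))| ≤
      6 * (n / q) + q := by
  have hconn : ({k : ℕ | c - θ * k ∈ I} : Set ℕ).OrdConnected := by
    rcases le_total 0 θ with h0 | h0
    · refine hI.preimage_anti fun k l hkl => ?_
      gcongr
    · refine hI.preimage_mono fun k l hkl => ?_
      have : (k : ℝ) ≤ l := by exact_mod_cast hkl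
      nlinarith
  obtain ⟨a, b, hab⟩ := exists_eq_Ico_of_ordConnected
    (S := (Finset.range n).filter fun k : ℕ => c - θ * k ∈ I) (by
      rw [Finset.coe_filter]
      simp only [Finset.mem_range]
      exact ordConnected_Iio.inter hconn)
  have hlen : b - a ≤ n := by
    rw [← Nat.card_Ico, ← hab]
    exact (Finset.card_filter_le _ _).trans_eq (Finset.card_range n)
  have hshift (k : ℕ) : c - θ * ((a + k : ℕ) : ℝ) = c - θ * a - θ * k := by
    push_cast
    ring
  rw [hab, Finset.sum_Ico_eq_sum_range]
  simp only [hshift]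
  refine (abs_sum_half_sub_fract_le hq hpq hθ (b - a) (c - θ * a)).trans ?_
  gcongr

lemma abs_sum_columnError_le_of_isCoprime (H : ℕ) (c : ℝ) (hθ : |θ| ≤ 1) {p : ℤ} {q : ℕ}
    (hq : 2 ≤ q) (hpq : IsCoprime p (q : ℤ)) (hθpq : |θ - p / q| ≤ 1 / (q : ℝ) ^ 2) :
    |∑ k ∈ Finset.range H, columnError H θ (c - θ * k)| ≤ 6 * (H / q) + 21 * q := by
  classical
  have hq0 : 0 < q := by omega
  have hq2 : (2 : ℝ) ≤ q := by exact_mod_cast hq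
  set bottom := (Finset.range H).filter fun k : ℕ => |c - θ * k - 0| ≤ 1
  set top := (Finset.range H).filter fun k : ℕ => |c - θ * k - (H - 1)| ≤ 1
  have hcard : ((bottom ∪ top).card : ℝ) ≤ 8 * q + 2 := by
    have hslope := one_div_two_mul_le_abs_of_isCoprime hq hpq hθpq
    have hbottom : bottom.card ≤ 4 * q + 1 :=
      card_le_of_abs_sub_mul_sub_le_one hq0 hslope fun k hk => (Finset.mem_filter.1 hk).2
    have htop : top.card ≤ 4 * q + 1 :=
      card_le_of_abs_sub_mul_sub_le_one hq0 hslope fun k hk => (Finset.mem_filter.1 hk).2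
    have := Finset.card_union_le bottom top
    exact_mod_cast (by omega : (bottom ∪ top).card ≤ 8 * q + 2)
  have hinside : |∑ k ∈ (Finset.range H).filter fun k : ℕ => c - θ * k ∈ Icc (1 : ℝ) (H - 2),
      columnError H θ (c - θ * k)| ≤ 6 * (H / q) + q := by
    rw [Finset.sum_congr rfl fun k hk => columnError_of_mem_Icc hθ (Finset.mem_filter.1 hk).2]
    exact abs_sum_filter_half_sub_fract_le hq0 hpq hθpq H c ordConnected_Icc
  have hnear : ((Finset.range H).filter fun k : ℕ => ¬c - θ * k ∈ Icc (1 : ℝ) (H - 2)).filter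
      (fun k : ℕ => |columnError H θ (c - θ * k)| ≠ 0) ⊆ bottom ∪ top := by
    intro k hk
    simp only [Finset.mem_filter, abs_ne_zero] at hk
    simp only [bottom, top, Finset.mem_union, Finset.mem_filter, hk.1.1, true_and]
    exact abs_sub_le_one_or_of_columnError_ne_zero hθ hk.2 hk.1.2
  have houtside : |∑ k ∈ (Finset.range H).filter fun k : ℕ => ¬c - θ * k ∈ Icc (1 : ℝ) (H - 2),
      columnError H θ (c - θ * k)| ≤ (bottom ∪ top).card * 2 := by
    refine (Finset.abs_sum_le_sum_abs _ _).trans ?_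
    rw [← Finset.sum_filter_ne_zero, ← nsmul_eq_mul]
    exact (Finset.sum_le_sum_of_subset_of_nonneg hnear fun _ _ _ => abs_nonneg _).trans
      (Finset.sum_le_card_nsmul _ _ 2 fun k _ => abs_columnError_le H hθ _)
  rw [← Finset.sum_filter_add_sum_filter_not (Finset.range H)
    fun k : ℕ => c - θ * k ∈ Icc (1 : ℝ) (H - 2)]
  refine (abs_add_le _ _).trans ?_
  linarith

end Columns

/-! ### Lattice points and area in grid boxes -/

/-- The counting measure of the lattice `ℤ²`, as a measure on the plane. -/
def latticeMeasure : Measure E2 := Measure.map ek Measure.count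

/-- The discrepancy of a plane set: its number of lattice points minus its area. -/
def discrepancy (S : Set E2) : ℝ := latticeMeasure.real S - volume.real S

/-- The interval of length `H` whose integers are `w, …, w + H - 1`. Its end points are
half-integers, so that it is a union of unit intervals centred at its integers. -/
def gridInterval (H : ℕ) (w : ℤ) : Set ℝ := Ico (w - 1 / 2) (w + H - 1 / 2)

/-- The box with index `m` in the square grid of mesh `H`. -/
def gridBox (H : ℕ) (m : Fin 2 → ℤ) : Set E2 := {x | ∀ i, x i ∈ gridInterval H (H * m i)}

/-- The closed half-plane `⟪ν, x⟫ ≤ c`. -/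
def halfPlane (ν : E2) (c : ℝ) : Set E2 := {x | ⟪ν, x⟫ ≤ c}

lemma intCast_mem_gridInterval {H : ℕ} {w z : ℤ} :
    (z : ℝ) ∈ gridInterval H w ↔ w ≤ z ∧ z < w + H := by
  constructor
  · rintro ⟨hl, hr⟩
    have hl' : (w : ℝ) < z + 1 := by linarith
    have hr' : (z : ℝ) < w + H := by linarith
    exact ⟨Int.lt_add_one_iff.1 (by exact_mod_cast hl'), by exact_mod_cast hr'⟩
  · rintro ⟨hl, hr⟩
    have hl' : (w : ℝ) ≤ z := by exact_mod_cast hl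
    have hr' : (z : ℝ) + 1 ≤ w + H := by exact_mod_cast hr
    constructor <;> linarith

lemma measurableSet_gridInterval (H : ℕ) (w : ℤ) : MeasurableSet (gridInterval H w) :=
  measurableSet_Ico

lemma volume_gridInterval (H : ℕ) (w : ℤ) : volume (gridInterval H w) = H := by
  rw [gridInterval, Real.volume_Ico, show (w : ℝ) + H - 1 / 2 - (w - 1 / 2) = H by ring,
    ENNReal.ofReal_natCast]

lemma inner_eq_add_mul (x y : E2) : ⟪x, y⟫ = x 0 * y 0 + x 1 * y 1 := by
  simp [PiLp.inner_apply, Fin.sum_univ_two, mul_comm]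

lemma abs_apply_le_norm (x : E2) (i : Fin 2) : |x i| ≤ ‖x‖ := PiLp.norm_apply_le x i

lemma norm_le_abs_add_abs (x : E2) : ‖x‖ ≤ |x 0| + |x 1| := by
  rw [EuclideanSpace.norm_eq, Fin.sum_univ_two, Real.norm_eq_abs, Real.norm_eq_abs]
  refine Real.sqrt_le_iff.2 ⟨by positivity, ?_⟩
  nlinarith [abs_nonneg (x 0), abs_nonneg (x 1)]

lemma ek_apply (k : Fin 2 → ℤ) (i : Fin 2) : ek k i = k i := rfl

lemma measurable_ek : Measurable ek := measurable_of_countable _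

lemma antilipschitzWith_ek : AntilipschitzWith 1 ek := by
  refine AntilipschitzWith.of_le_mul_dist fun k k' => ?_
  rw [NNReal.coe_one, one_mul, dist_pi_le_iff dist_nonneg]
  exact fun i => PiLp.dist_apply_le (ek k) (ek k') i

lemma latticeMeasure_apply {S : Set E2} (hS : MeasurableSet S) :
    latticeMeasure S = ((ek ⁻¹' S).encard : ℝ≥0∞) := by
  rw [latticeMeasure, Measure.map_apply measurable_ek hS,
    Measure.count_apply (ek ⁻¹' S).to_countable.measurableSet]

lemma latticeMeasure_real_eq_latticeCount {S : Set E2} (hS : MeasurableSet S) :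
    latticeMeasure.real S = latticeCount S := by
  rw [Measure.real, latticeMeasure_apply hS]
  change _ = ((Nat.card (ek ⁻¹' S) : ℕ) : ℝ)
  rw [Nat.card_coe_set_eq, Set.ncard]
  generalize (ek ⁻¹' S).encard = e
  induction e using ENat.recTopCoe <;> simp

lemma latticeMeasure_lt_top {S : Set E2} (hS : Bornology.IsBounded S) : latticeMeasure S < ⊤ := by
  have hfin : (ek ⁻¹' closure S).Finite :=
    (antilipschitzWith_ek.isBounded_preimage hS.closure).isCompact_closure.finite_of_discrete.subset
      subset_closure
  refine (measure_mono subset_closure).trans_lt ?_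
  rw [latticeMeasure_apply isClosed_closure.measurableSet, hfin.encard_eq_coe_toFinset_card]
  simp

section GridBox

variable {H : ℕ} {m : Fin 2 → ℤ}

lemma measurableSet_gridBox (H : ℕ) (m : Fin 2 → ℤ) : MeasurableSet (gridBox H m) := by
  have : gridBox H m = ⋂ i, (fun x : E2 => x i) ⁻¹' gridInterval H (H * m i) := by
    ext; simp [gridBox]
  rw [this]
  exact MeasurableSet.iInter fun i =>
    (by fun_prop : Continuous fun x : E2 => x i).measurable (measurableSet_gridInterval _ _)

lemma convex_gridBox (H : ℕ) (m : Fin 2 → ℤ) : Convex ℝ (gridBox H m) :=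
  fun _ hx _ hy _ _ ha hb hab i => convex_Ico _ _ (hx i) (hy i) ha hb hab

lemma norm_sub_le_of_mem_gridBox {x y : E2} (hx : x ∈ gridBox H m) (hy : y ∈ gridBox H m) :
    ‖x - y‖ ≤ 2 * H := by
  have h : ∀ i, |(x - y) i| ≤ H := fun i => by
    rw [PiLp.sub_apply, abs_le]
    constructor <;> linarith [(hx i).1, (hx i).2, (hy i).1, (hy i).2]
  linarith [norm_le_abs_add_abs (x - y), h 0, h 1]

lemma isBounded_gridBox (H : ℕ) (m : Fin 2 → ℤ) : Bornology.IsBounded (gridBox H m) :=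
  Metric.isBounded_iff.2
    ⟨2 * H, fun _ hx _ hy => (dist_eq_norm _ _).trans_le (norm_sub_le_of_mem_gridBox hx hy)⟩

lemma mem_gridBox_iff (hH : 0 < H) {x : E2} :
    x ∈ gridBox H m ↔ ∀ i, m i = ⌊(x i + 1 / 2) / H⌋ := by
  have hH' : (0 : ℝ) < H := by exact_mod_cast hH
  refine forall_congr' fun i => ?_
  rw [eq_comm, Int.floor_eq_iff, le_div_iff₀ hH', div_lt_iff₀ hH', gridInterval, mem_Ico]
  push_cast
  constructor <;> rintro ⟨hl, hr⟩ <;> constructor <;> nlinarith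

lemma disjoint_gridBox (hH : 0 < H) {m' : Fin 2 → ℤ} (h : m ≠ m') :
    Disjoint (gridBox H m) (gridBox H m') :=
  Set.disjoint_left.2 fun _ hx hx' =>
    h (funext fun i => ((mem_gridBox_iff hH).1 hx i).trans ((mem_gridBox_iff hH).1 hx' i).symm)

lemma volume_gridBox (H : ℕ) (m : Fin 2 → ℤ) : volume.real (gridBox H m) = H ^ 2 := by
  have : gridBox H m = WithLp.ofLp ⁻¹' univ.pi fun i => gridInterval H (H * m i) := by
    ext; simp [gridBox]
  rw [Measure.real, this, (PiLp.volume_preserving_ofLp (Fin 2)).measure_preimage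
    (MeasurableSet.univ_pi fun _ => measurableSet_gridInterval _ _).nullMeasurableSet, volume_pi_pi]
  simp [volume_gridInterval, sq]

lemma latticeCount_gridBox (H : ℕ) (m : Fin 2 → ℤ) : latticeCount (gridBox H m) = H ^ 2 := by
  have : {k : Fin 2 → ℤ | ek k ∈ gridBox H m} =
      Fintype.piFinset fun i => Finset.Ico (H * m i) (H * m i + H) := by
    ext k
    simp [gridBox, ek_apply, intCast_mem_gridInterval]
  rw [latticeCount, this, Nat.card_coe_set_eq, ncard_coe_finset, Fintype.card_piFinset]
  simp [sq]

lemma discrepancy_gridBox (H : ℕ) (m : Fin 2 → ℤ) : discrepancy (gridBox H m) = 0 := by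
  rw [discrepancy, latticeMeasure_real_eq_latticeCount (measurableSet_gridBox H m),
    latticeCount_gridBox, volume_gridBox, Nat.cast_pow, sub_self]

lemma measureReal_eq_sum_inter_gridBox (μ : Measure E2) (hH : 0 < H) {K : Set E2}
    (hK : MeasurableSet K) (hfin : μ K ≠ ⊤) {F : Finset (Fin 2 → ℤ)}
    (hF : ∀ x ∈ K, ∃ m ∈ F, x ∈ gridBox H m) :
    μ.real K = ∑ m ∈ F, μ.real (K ∩ gridBox H m) := by
  have hcover : K = ⋃ m ∈ F, K ∩ gridBox H m := by
    rw [← inter_iUnion₂, eq_comm, inter_eq_left]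
    exact fun x hx => mem_iUnion₂.2 (by simpa using hF x hx)
  conv_lhs => rw [hcover]
  exact measureReal_biUnion_finset
    (fun m _ m' _ hmm => (disjoint_gridBox hH hmm).mono inter_subset_right inter_subset_right)
    (fun m _ => hK.inter (measurableSet_gridBox H m))
    (fun m _ => measure_ne_top_of_subset inter_subset_left hfin)

lemma discrepancy_eq_sum_inter_gridBox (hH : 0 < H) {K : Set E2} (hK : MeasurableSet K)
    (hbdd : Bornology.IsBounded K) {F : Finset (Fin 2 → ℤ)}
    (hF : ∀ x ∈ K, ∃ m ∈ F, x ∈ gridBox H m) :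
    discrepancy K = ∑ m ∈ F, discrepancy (K ∩ gridBox H m) := by
  simp only [discrepancy, Finset.sum_sub_distrib]
  rw [measureReal_eq_sum_inter_gridBox _ hH hK (latticeMeasure_lt_top hbdd).ne hF,
    measureReal_eq_sum_inter_gridBox _ hH hK hbdd.measure_lt_top.ne hF]

lemma exists_eq_of_discrepancy_inter_gridBox_ne_zero {f : E2 → ℝ} (hf : Continuous f) {t : ℝ}
    (h : discrepancy ({x | f x ≤ t} ∩ gridBox H m) ≠ 0) : ∃ x ∈ gridBox H m, f x = t := by
  have hbelow : ∃ x ∈ gridBox H m, f x ≤ t := by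
    by_contra! hne
    have : {x | f x ≤ t} ∩ gridBox H m = ∅ :=
      eq_empty_of_forall_notMem fun x hx => (hne x hx.2).not_ge hx.1
    exact h (by simp [this, discrepancy])
  have habove : ∃ x ∈ gridBox H m, t ≤ f x := by
    by_contra! hne
    refine h ?_
    have : {x | f x ≤ t} ∩ gridBox H m = gridBox H m :=
      inter_eq_right.2 fun x hx => (hne x hx).le
    rw [this, discrepancy_gridBox]
  obtain ⟨x, hx, hxt⟩ := hbelow
  obtain ⟨y, hy, hyt⟩ := habove
  exact (convex_gridBox H m).isPreconnected.intermediate_value hx hy hf.continuousOn ⟨hxt, hyt⟩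

end GridBox

/-! ### Half-planes in grid boxes -/

section HalfPlane

variable {H : ℕ} {m : Fin 2 → ℤ} {i j : Fin 2}

lemma forall_fin_two_iff_of_ne (hij : i ≠ j) {Q : Fin 2 → Prop} : (∀ k, Q k) ↔ Q i ∧ Q j := by
  refine ⟨fun h => ⟨h i, h j⟩, fun h k => ?_⟩
  obtain rfl | rfl : k = i ∨ k = j := by omega
  exacts [h.1, h.2]

lemma inner_eq_add_mul_of_ne (hij : i ≠ j) (x y : E2) : ⟪x, y⟫ = x i * y i + x j * y j := by
  obtain ⟨rfl, rfl⟩ | ⟨rfl, rfl⟩ : i = 0 ∧ j = 1 ∨ i = 1 ∧ j = 0 := by omega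
  · exact inner_eq_add_mul x y
  · rw [inner_eq_add_mul, add_comm]

lemma measurePreserving_apply_prodMk (hij : i ≠ j) :
    MeasurePreserving (fun x : E2 => (x i, x j)) volume volume := by
  have h01 : MeasurePreserving (fun x : E2 => (x 0, x 1)) volume volume :=
    (volume_preserving_finTwoArrow ℝ).comp (PiLp.volume_preserving_ofLp (Fin 2))
  obtain ⟨rfl, rfl⟩ | ⟨rfl, rfl⟩ : i = 0 ∧ j = 1 ∨ i = 1 ∧ j = 0 := by omega
  · exact h01
  · exact (Measure.measurePreserving_swap (μ := (volume : Measure ℝ)) (ν := volume)).comp h01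

lemma latticeCount_gridBox_filter (hij : i ≠ j) (P : ℝ → ℝ → Prop) [∀ x y, Decidable (P x y)] :
    latticeCount {x ∈ gridBox H m | P (x i) (x j)} = ∑ k ∈ Finset.range H,
      ((Finset.range H).filter fun l : ℕ =>
        P ((H * m i : ℤ) + k) ((H * m j : ℤ) + l)).card := by
  set a : ℤ := H * m i
  set b : ℤ := H * m j
  have hmem : ∀ k : Fin 2 → ℤ, ek k ∈ {x ∈ gridBox H m | P (x i) (x j)} ↔
      ((a ≤ k i ∧ k i < a + H) ∧ (b ≤ k j ∧ k j < b + H)) ∧ P (k i) (k j) := fun k => by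
    rw [mem_ofPred_eq, gridBox, mem_ofPred_eq, forall_fin_two_iff_of_ne hij]
    simp only [ek_apply, intCast_mem_gridInterval, a, b]
  rw [latticeCount, ← Finset.card_sigma, ← Nat.card_eq_finsetCard]
  simp only [hmem]
  let toBox : ((Finset.range H).sigma fun k => (Finset.range H).filter fun l : ℕ =>
      P (a + k) (b + l)) → Fin 2 → ℤ := fun z idx => if idx = i then a + z.1.1 else b + z.1.2
  refine (Nat.card_congr (Equiv.ofBijective (fun z => ⟨toBox z, ?mem⟩) ⟨?inj, ?surj⟩)).symm
  case mem =>
    obtain ⟨⟨x, y⟩, hz⟩ := z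
    simp only [Finset.mem_sigma, Finset.mem_range, Finset.mem_filter] at hz
    simp only [toBox, mem_ofPred_eq, if_true, if_neg hij.symm]
    exact ⟨by omega, by exact_mod_cast hz.2.2⟩
  case inj =>
    rintro ⟨⟨x, y⟩, _⟩ ⟨⟨x', y'⟩, _⟩ h
    have hx := congrFun (Subtype.ext_iff.1 h) i
    have hy := congrFun (Subtype.ext_iff.1 h) j
    simp only [toBox, if_true, if_neg hij.symm, add_right_inj, Nat.cast_inj] at hx hy
    simp [hx, hy]
  case surj =>
    rintro ⟨k, ⟨⟨hi, hi'⟩, hj, hj'⟩, hP⟩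
    obtain ⟨x, hx⟩ := Int.le.dest hi
    obtain ⟨y, hy⟩ := Int.le.dest hj
    rw [← hx, ← hy] at hP
    push_cast at hP
    refine ⟨⟨⟨x, y⟩, ?_⟩, Subtype.ext (funext ((forall_fin_two_iff_of_ne hij).2 ⟨?_, ?_⟩))⟩
    · simp only [Finset.mem_sigma, Finset.mem_range, Finset.mem_filter]
      exact ⟨by omega, by omega, hP⟩
    · simpa only [toBox, if_true] using hx
    · simpa only [toBox, if_neg hij.symm] using hy

/-- Fubini, over the columns of the box in the direction of the `j`-th coordinate. -/
lemma volume_gridBox_filter (hij : i ≠ j) {P : ℝ → ℝ → Prop}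
    (hP : MeasurableSet {z : ℝ × ℝ | P z.1 z.2}) {f : ℝ → ℝ} (hf : Continuous f) (hf0 : 0 ≤ f)
    (hslice : ∀ x, volume {y ∈ gridInterval H (H * m j) | P x y} =
      ENNReal.ofReal (f (x - (H * m i : ℤ)))) :
    volume.real {x ∈ gridBox H m | P (x i) (x j)} = ∫ x in (-1 / 2 : ℝ)..(H - 1 / 2), f x := by
  set a : ℤ := H * m i
  set b : ℤ := H * m j
  set T : Set (ℝ × ℝ) := gridInterval H a ×ˢ gridInterval H b ∩ {z | P z.1 z.2} with hT
  have hTmeas : MeasurableSet T :=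
    ((measurableSet_gridInterval _ _).prod (measurableSet_gridInterval _ _)).inter hP
  have hpre : {x ∈ gridBox H m | P (x i) (x j)} = (fun x : E2 => (x i, x j)) ⁻¹' T := by
    ext x
    rw [mem_ofPred_eq, gridBox, mem_ofPred_eq, forall_fin_two_iff_of_ne hij]
    rfl
  have hsection : ∀ x, volume (Prod.mk x ⁻¹' T) =
      (gridInterval H a).indicator (fun x => ENNReal.ofReal (f (x - a))) x := fun x => by
    by_cases hx : x ∈ gridInterval H a
    · rw [indicator_of_mem hx, ← hslice x]
      congr 1
      ext y
      simp [hT, hx]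
    · rw [indicator_of_notMem hx]
      convert measure_empty (μ := (volume : Measure ℝ))
      ext y
      simp [hT, hx]
  have hcont : Continuous fun x => f (x - a) := by fun_prop
  rw [Measure.real, hpre, (measurePreserving_apply_prodMk hij).measure_preimage
    hTmeas.nullMeasurableSet, Measure.volume_eq_prod, Measure.prod_apply hTmeas]
  simp only [hsection]
  rw [lintegral_indicator (measurableSet_gridInterval _ _), gridInterval,
    ← ofReal_integral_eq_lintegral_ofReal (hcont.integrableOn_Icc.mono_set Ico_subset_Icc_self)
      (ae_of_all _ fun x => hf0 (x - a)),
    ENNReal.toReal_ofReal (integral_nonneg fun x => hf0 (x - a)), integral_Ico_eq_integral_Ioc,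
    ← intervalIntegral.integral_of_le (by linarith [H.cast_nonneg (α := ℝ)]),
    intervalIntegral.integral_comp_sub_right]
  congr 1 <;> ring

lemma volume_gridInterval_filter_le (H : ℕ) (w : ℤ) (u : ℝ) :
    volume {y ∈ gridInterval H w | y ≤ w + u} = ENNReal.ofReal (columnLength H u) := by
  have hae : (gridInterval H w ∩ Iic (w + u) : Set ℝ) =ᵐ[volume]
      (gridInterval H w ∩ Iio (w + u) : Set ℝ) := (ae_eq_refl _).inter Iio_ae_eq_Iic.symm
  change volume (gridInterval H w ∩ Iic (w + u)) = _
  rw [measure_congr hae, gridInterval, Ico_inter_Iio, Real.volume_Ico, columnLength,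
    ENNReal.ofReal_max, ENNReal.ofReal_zero, max_eq_right zero_le, ← min_sub_sub_right,
    min_comm]
  congr 2 <;> ring

lemma volume_gridInterval_filter_ge (H : ℕ) (w : ℤ) (u : ℝ) :
    volume {y ∈ gridInterval H w | w + (H - 1 - u) ≤ y} = ENNReal.ofReal (columnLength H u) := by
  change volume (gridInterval H w ∩ Ici (w + (H - 1 - u))) = _
  rw [gridInterval, Ico_inter_Ici, Real.volume_Ico, columnLength, ENNReal.ofReal_max,
    ENNReal.ofReal_zero, max_eq_right zero_le, ← min_sub_sub_left, min_comm]
  congr 2 <;> ring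

lemma card_filter_sub_le_eq_columnCount (H : ℕ) (u : ℝ) :
    ((Finset.range H).filter fun l : ℕ => H - 1 - u ≤ l).card = columnCount H u := by
  rw [columnCount, Finset.card_filter, Finset.card_filter, ← Finset.sum_range_reflect]
  refine Finset.sum_congr rfl fun l hl => ?_
  have hl : l + 1 ≤ H := Finset.mem_range.1 hl
  rw [Nat.sub_sub, Nat.cast_sub (by omega)]
  congr 1
  push_cast
  exact propext ⟨fun h => by linarith, fun h => by linarith⟩

/-- The reflected alternative is the case of a half-plane lying above its boundary line. -/
lemma measureReal_gridBox_filter (hij : i ≠ j) {P : ℝ → ℝ → Prop} {c θ : ℝ}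
    (hP : (∀ x y, P x y ↔ y ≤ (H * m j : ℤ) + (c - θ * (x - (H * m i : ℤ)))) ∨
      ∀ x y, P x y ↔ (H * m j : ℤ) + (H - 1 - (c - θ * (x - (H * m i : ℤ)))) ≤ y) :
    latticeMeasure.real {x ∈ gridBox H m | P (x i) (x j)} =
        ∑ k ∈ Finset.range H, (columnCount H (c - θ * k) : ℝ) ∧
      volume.real {x ∈ gridBox H m | P (x i) (x j)} =
        ∫ x in (-1 / 2 : ℝ)..(H - 1 / 2), columnLength H (c - θ * x) := by
  classical
  have hPm : MeasurableSet {z : ℝ × ℝ | P z.1 z.2} := by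
    rcases hP with h | h <;> simp only [h] <;>
      exact (isClosed_le (by fun_prop) (by fun_prop)).measurableSet
  have hbox : MeasurableSet {x ∈ gridBox H m | P (x i) (x j)} := by
    have hmap : Measurable fun x : E2 => (x i, x j) :=
      (measurePreserving_apply_prodMk hij).measurable
    exact (measurableSet_gridBox H m).inter (hmap hPm)
  constructor
  · rw [latticeMeasure_real_eq_latticeCount hbox, latticeCount_gridBox_filter hij, Nat.cast_sum]
    refine Finset.sum_congr rfl fun k _ => congrArg _ ?_
    rcases hP with h | h
    · simp only [h, add_le_add_iff_left, add_sub_cancel_left, columnCount]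
    · simp only [h, add_le_add_iff_left, add_sub_cancel_left, card_filter_sub_le_eq_columnCount]
  · refine volume_gridBox_filter hij hPm
      ((continuous_columnLength H).comp (by fun_prop)) (fun x => le_max_left _ _) fun x => ?_
    rcases hP with h | h
    · simp only [h, volume_gridInterval_filter_le]
    · simp only [h, volume_gridInterval_filter_ge]

lemma exists_measureReal_halfPlane_inter_gridBox (H : ℕ) (m : Fin 2 → ℤ) (hij : i ≠ j) {ν : E2}
    (hν : ν j ≠ 0) :
    ∃ c₀ θ : ℝ, |θ| = |ν i / ν j| ∧ ∀ c,
      latticeMeasure.real (halfPlane ν c ∩ gridBox H m) =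
        ∑ k ∈ Finset.range H, (columnCount H (c₀ + c / |ν j| - θ * k) : ℝ) ∧
      volume.real (halfPlane ν c ∩ gridBox H m) =
        ∫ x in (-1 / 2 : ℝ)..(H - 1 / 2), columnLength H (c₀ + c / |ν j| - θ * x) := by
  have hset : ∀ c, halfPlane ν c ∩ gridBox H m =
      {x ∈ gridBox H m | ν i * x i + ν j * x j ≤ c} := fun c => by
    simp only [halfPlane, inner_eq_add_mul_of_ne hij, inter_comm _ (gridBox H m)]
    rfl
  simp only [hset]
  set a : ℤ := H * m i
  set b : ℤ := H * m j
  rcases hν.lt_or_gt with hneg | hpos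
  · refine ⟨H - 1 + b - ν i * a / |ν j|, -(ν i / ν j), abs_neg _, fun c =>
      measureReal_gridBox_filter hij (P := fun x y => ν i * x + ν j * y ≤ c)
        (Or.inr fun x y => ?_)⟩
    have hline : b + (H - 1 - (H - 1 + b - ν i * a / |ν j| + c / |ν j| - -(ν i / ν j) * (x - a))) =
        (c - ν i * x) / ν j := by
      rw [abs_of_neg hneg]
      field_simp
      ring
    rw [hline, div_le_iff_of_neg hneg, mul_comm y, le_sub_iff_add_le']
  · refine ⟨-b - ν i * a / |ν j|, ν i / ν j, rfl, fun c =>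
      measureReal_gridBox_filter hij (P := fun x y => ν i * x + ν j * y ≤ c)
        (Or.inl fun x y => ?_)⟩
    have hline : b + (-b - ν i * a / |ν j| + c / |ν j| - ν i / ν j * (x - a)) =
        (c - ν i * x) / ν j := by
      rw [abs_of_pos hpos]
      field_simp
      ring
    rw [hline, le_div_iff₀ hpos, mul_comm y, le_sub_iff_add_le']

lemma volume_strip_inter_gridBox_le (m : Fin 2 → ℤ) (hij : i ≠ j) {ν : E2} (hν : ν j ≠ 0)
    {t ε : ℝ} (hε : 0 ≤ ε) :
    volume.real (halfPlane ν t ∩ gridBox H m) - volume.real (halfPlane ν (t - ε) ∩ gridBox H m) ≤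
      H * (ε / |ν j|) := by
  obtain ⟨c₀, θ, -, hc⟩ := exists_measureReal_halfPlane_inter_gridBox H m hij hν
  rw [(hc t).2, (hc (t - ε)).2, ← intervalIntegral.integral_sub
    (intervalIntegrable_columnLength _ _ _ _ _) (intervalIntegrable_columnLength _ _ _ _ _)]
  refine (Real.le_norm_self _).trans
    ((intervalIntegral.norm_integral_le_of_norm_le_const (C := ε / |ν j|)
      fun x _ => ?_).trans_eq ?_)
  · refine (abs_columnLength_sub_le _ _ _).trans_eq ?_
    rw [show c₀ + t / |ν j| - θ * x - (c₀ + (t - ε) / |ν j| - θ * x) = ε / |ν j| by ring,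
      abs_of_nonneg (by positivity)]
  · rw [show (H : ℝ) - 1 / 2 - -1 / 2 = H by ring, Nat.abs_cast, mul_comm]

lemma abs_discrepancy_inter_gridBox_le (hij : i ≠ j) {ν : E2} (hν : ν j ≠ 0) {K : Set E2}
    {t ε B : ℝ} (hε : 0 ≤ ε) (hupper : K ∩ gridBox H m ⊆ halfPlane ν t)
    (hlower : halfPlane ν (t - ε) ∩ gridBox H m ⊆ K)
    (hB : ∀ c θ : ℝ, |θ| = |ν i / ν j| →
      |∑ k ∈ Finset.range H, columnError H θ (c - θ * k)| ≤ B) :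
    |discrepancy (K ∩ gridBox H m)| ≤ B + H * (ε / |ν j|) := by
  obtain ⟨c₀, θ, hθ, hc⟩ := exists_measureReal_halfPlane_inter_gridBox H m hij hν
  have hhalf : ∀ c, |discrepancy (halfPlane ν c ∩ gridBox H m)| ≤ B := fun c => by
    rw [discrepancy, (hc c).1, (hc c).2, ← sum_columnError]
    exact hB _ _ hθ
  have hstrip := volume_strip_inter_gridBox_le (H := H) m hij hν hε (t := t)
  have hbdd : ∀ S : Set E2, Bornology.IsBounded (S ∩ gridBox H m) := fun S =>
    (isBounded_gridBox H m).subset inter_subset_right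
  have hsub : K ∩ gridBox H m ⊆ halfPlane ν t ∩ gridBox H m := fun x hx => ⟨hupper hx, hx.2⟩
  have hsup : halfPlane ν (t - ε) ∩ gridBox H m ⊆ K ∩ gridBox H m := fun x hx => ⟨hlower hx, hx.2⟩
  have hl₁ := measureReal_mono hsub (latticeMeasure_lt_top (hbdd _)).ne
  have hl₂ := measureReal_mono hsup (latticeMeasure_lt_top (hbdd _)).ne
  have hv₁ := measureReal_mono (μ := volume) hsub (hbdd _).measure_lt_top.ne
  have hv₂ := measureReal_mono (μ := volume) hsup (hbdd _).measure_lt_top.ne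
  have ht := abs_le.1 (hhalf t)
  have ht' := abs_le.1 (hhalf (t - ε))
  rw [discrepancy] at ht ht' ⊢
  rw [abs_le]
  constructor <;> linarith [ht.1, ht.2, ht'.1, ht'.2]

end HalfPlane

/-! ### Plane geometry -/

open scoped EuclideanSpace

section OrientedPlane

variable {V : Type*} [NormedAddCommGroup V] [InnerProductSpace ℝ V]
  [Fact (Module.finrank ℝ V = 2)] (o : Orientation ℝ V (Fin 2))

lemma inner_smul_add_inner_rightAngleRotation_smul {x : V} (hx : ‖x‖ = 1) (v : V) :
    ⟪v, x⟫ • x + ⟪v, o.rightAngleRotation x⟫ • o.rightAngleRotation x = v := by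
  refine ext_inner_right ℝ fun y => ?_
  have h := o.inner_mul_inner_add_areaForm_mul_areaForm x v y
  rw [hx, one_pow, one_mul, real_inner_comm, o.areaForm_swap x v] at h
  simp only [inner_add_left, real_inner_smul_left, o.inner_rightAngleRotation_left,
    o.inner_rightAngleRotation_right, h]

lemma eq_inner_rightAngleRotation_smul {x v : V} (hx : ‖x‖ = 1) (h : ⟪x, v⟫ = 0) :
    v = ⟪v, o.rightAngleRotation x⟫ • o.rightAngleRotation x := by
  have hv := inner_smul_add_inner_rightAngleRotation_smul o hx v
  rwa [real_inner_comm, h, zero_smul, zero_add, eq_comm] at hv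

end OrientedPlane

lemma abs_areaForm_eq (o : Orientation ℝ E2 (Fin 2)) (x y : E2) :
    |o.areaForm x y| = |x 0 * y 1 - x 1 * y 0| := by
  rw [o.areaForm_to_volumeForm, o.volumeForm_robust' (EuclideanSpace.basisFun (Fin 2) ℝ),
    Module.Basis.det_apply, Matrix.det_fin_two]
  simp [Module.Basis.toMatrix_apply, mul_comm]

section InnerProductSpace

variable {V : Type*} [NormedAddCommGroup V] [InnerProductSpace ℝ V]

lemma half_le_inner {u v : V} (hu : ‖u‖ = 1) (hv : ‖v‖ = 1) (h : ‖u - v‖ ≤ 1) :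
    1 / 2 ≤ ⟪u, v⟫ := by
  have hsq := norm_sub_sq_real u v
  rw [hu, hv] at hsq
  nlinarith [norm_nonneg (u - v)]

lemma mul_norm_le_of_forall_inner_le {w : V} {r c : ℝ} (hr : 0 ≤ r)
    (h : ∀ y ∈ Metric.closedBall (0 : V) r, ⟪y, w⟫ ≤ c) : r * ‖w‖ ≤ c := by
  have hmem : (r * ‖w‖⁻¹) • w ∈ Metric.closedBall (0 : V) r := by
    rw [mem_closedBall_zero_iff, norm_smul, Real.norm_of_nonneg (by positivity), mul_assoc]
    exact mul_le_of_le_one_right hr inv_mul_le_one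
  have hle := h _ hmem
  rcases eq_or_ne ‖w‖ 0 with hw | hw
  · simpa [hw] using hle
  · rwa [real_inner_smul_left, real_inner_self_eq_norm_sq, mul_assoc, pow_two,
      inv_mul_cancel_left₀ hw] at hle

lemma exists_forall_inner_lt [CompleteSpace V] {s : Set V} (hs : Convex ℝ s) (ho : IsOpen s)
    {p : V} (hp : p ∉ s) : ∃ w : V, ∀ y ∈ s, ⟪y, w⟫ < ⟪p, w⟫ := by
  obtain ⟨f, hf⟩ := geometric_hahn_banach_open_point hs ho hp
  have hinner : ∀ y, ⟪y, (InnerProductSpace.toDual ℝ V).symm f⟫ = f y := fun y => by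
    rw [real_inner_comm, InnerProductSpace.toDual_symm_apply]
  exact ⟨_, fun y hy => (hinner y).trans_lt ((hf y hy).trans_eq (hinner p).symm)⟩

lemma inner_le_of_mem_closure {s : Set V} {w : V} {c : ℝ} (h : ∀ y ∈ s, ⟪y, w⟫ ≤ c) {y : V}
    (hy : y ∈ closure s) : ⟪y, w⟫ ≤ c :=
  closure_minimal (t := {y | ⟪y, w⟫ ≤ c}) h (isClosed_le (by fun_prop) continuous_const) hy

lemma notMem_interior_of_isMaxOn_inner {s : Set V} {x y : V} (hx : x ≠ 0)
    (h : IsMaxOn (fun z => ⟪z, x⟫) s y) : y ∉ interior s := by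
  intro hy
  have hmax : IsLocalMax (innerSL ℝ x) y := by
    simpa only [real_inner_comm, coe_innerSL_apply] using
      h.isLocalMax (mem_interior_iff_mem_nhds.1 hy)
  have hzero : innerSL ℝ x x = 0 := by rw [hmax.hasFDerivAt_eq_zero (innerSL ℝ x).hasFDerivAt]; rfl
  exact hx (inner_self_eq_zero.1 hzero)

lemma inner_deriv_eq_zero_of_forall_inner_le {f : ℝ → V} {f' w : V} {s : ℝ}
    (hf : HasDerivAt f f' s) (h : ∀ u, ⟪f u, w⟫ ≤ ⟪f s, w⟫) : ⟪f', w⟫ = 0 := by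
  have hmax : IsLocalMax (fun u => ⟪f u, w⟫) s := Filter.Eventually.of_forall h
  exact hmax.hasDerivAt_eq_zero (by simpa using hf.inner ℝ (hasDerivAt_const s w))

lemma inner_deriv_nonneg_of_forall_inner_sub_nonneg {f g : ℝ → V} {f' g' : V} {s : ℝ}
    (hf : HasDerivAt f f' s) (hg : HasDerivAt g g' s)
    (h : ∀ u, 0 ≤ ⟪f u - f s, g u - g s⟫) : 0 ≤ ⟪f', g'⟫ := by
  have hlim := (hasDerivAt_iff_tendsto_slope.1 hf).inner (𝕜 := ℝ)
    (hasDerivAt_iff_tendsto_slope.1 hg)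
  refine ge_of_tendsto hlim (Filter.Eventually.of_forall fun u => ?_)
  simp only [slope, vsub_eq_sub, real_inner_smul_left, real_inner_smul_right, ← mul_assoc]
  exact mul_nonneg (mul_self_nonneg _) (h u)

end InnerProductSpace

/-! ### The support function -/

section suppFn

variable {Ω : Set E2} {r R : ℝ}

lemma inner_le_suppFn (hΩ : Bornology.IsBounded Ω) (ξ : E2) {y : E2} (hy : y ∈ closure Ω) :
    ⟪y, ξ⟫ ≤ suppFn Ω ξ := by
  obtain ⟨R, hR⟩ := hΩ.exists_norm_le
  have hbdd : BddAbove ((fun x => ⟪x, ξ⟫) '' Ω) := by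
    refine ⟨R * ‖ξ‖, forall_mem_image.2 fun x hx => (real_inner_le_norm x ξ).trans ?_⟩
    gcongr
    exact hR x hx
  exact inner_le_of_mem_closure (fun x hx => le_csSup hbdd (mem_image_of_mem _ hx)) hy

lemma suppFn_le (hne : Ω.Nonempty) {ξ : E2} {B : ℝ} (h : ∀ y ∈ Ω, ⟪y, ξ⟫ ≤ B) :
    suppFn Ω ξ ≤ B :=
  csSup_le (hne.image _) (forall_mem_image.2 h)

lemma suppFn_smul_of_nonneg {c : ℝ} (hc : 0 ≤ c) (ξ : E2) :
    suppFn Ω (c • ξ) = c * suppFn Ω ξ := by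
  rw [suppFn, suppFn, ← smul_eq_mul, ← Real.sSup_smul_of_nonneg hc, ← image_smul, image_image]
  simp only [real_inner_smul_right, smul_eq_mul]

lemma smul_polarSet {t : ℝ} (ht : 0 < t) : t • polarSet Ω = {x | suppFn Ω x ≤ t} := by
  ext x
  rw [mem_smul_set_iff_inv_smul_mem₀ ht.ne', polarSet, mem_ofPred_eq, mem_ofPred_eq,
    suppFn_smul_of_nonneg (inv_nonneg.2 ht.le), inv_mul_le_iff₀ ht, mul_one]

lemma mul_norm_le_suppFn (hr : 0 ≤ r) (hball : Metric.closedBall 0 r ⊆ Ω)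
    (hΩ : Bornology.IsBounded Ω) (ξ : E2) : r * ‖ξ‖ ≤ suppFn Ω ξ :=
  mul_norm_le_of_forall_inner_le hr fun _ hy => inner_le_suppFn hΩ ξ (subset_closure (hball hy))

lemma suppFn_sub_le (hne : Ω.Nonempty) (hR : Ω ⊆ Metric.closedBall 0 R) (ξ ζ : E2) :
    suppFn Ω ξ - suppFn Ω ζ ≤ R * ‖ξ - ζ‖ := by
  refine sub_le_iff_le_add.2 (suppFn_le hne fun y hy => ?_)
  calc ⟪y, ξ⟫ = ⟪y, ξ - ζ⟫ + ⟪y, ζ⟫ := by rw [inner_sub_right, sub_add_cancel]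
    _ ≤ ‖y‖ * ‖ξ - ζ‖ + suppFn Ω ζ := by
      gcongr
      · exact real_inner_le_norm y _
      · exact inner_le_suppFn (Metric.isBounded_closedBall.subset hR) ζ (subset_closure hy)
    _ ≤ R * ‖ξ - ζ‖ + suppFn Ω ζ := by
      gcongr
      exact mem_closedBall_zero_iff.1 (hR hy)

lemma abs_suppFn_sub_le (hne : Ω.Nonempty) (hR : Ω ⊆ Metric.closedBall 0 R) (ξ ζ : E2) :
    |suppFn Ω ξ - suppFn Ω ζ| ≤ R * ‖ξ - ζ‖ :=
  abs_sub_le_iff.2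
    ⟨suppFn_sub_le hne hR ξ ζ, norm_sub_rev ξ ζ ▸ suppFn_sub_le hne hR ζ ξ⟩

lemma continuous_suppFn (hne : Ω.Nonempty) (hΩ : Bornology.IsBounded Ω) :
    Continuous (suppFn Ω) := by
  obtain ⟨R, hR⟩ := hΩ.subset_closedBall 0
  exact (LipschitzWith.of_dist_le' fun ξ ζ => by
    rw [Real.dist_eq, dist_eq_norm]
    exact abs_suppFn_sub_le hne hR ξ ζ).continuous

end suppFn

/-! ### Boundaries of positive curvature -/

lemma uniformContinuous_of_periodic {α : Type*} [UniformSpace α] {f : ℝ → α} {L : ℝ}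
    (hL : 0 < L) (hf : Function.Periodic f L) (hc : Continuous f) : UniformContinuous f := by
  have : Fact (0 < L) := ⟨hL⟩
  have hlift : Continuous (hf.lift : AddCircle L → α) := hc.quotient_lift _
  exact (CompactSpace.uniformContinuous_of_continuous hlift).comp
    (uniformContinuous_addMonoidHom_of_continuous
      (f := QuotientAddGroup.mk' (AddSubgroup.zmultiples L)) continuous_quotient_mk')

namespace BoundaryParam

variable {Ω : Set E2} {γ γ' γ'' : ℝ → E2} {L : ℝ}

lemma length_pos (h : BoundaryParam Ω γ γ' γ'' L) : 0 < L := h.1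

lemma hasDerivAt (h : BoundaryParam Ω γ γ' γ'' L) (s : ℝ) : HasDerivAt γ (γ' s) s := h.2.1 s

lemma continuous_tangent (h : BoundaryParam Ω γ γ' γ'' L) : Continuous γ' := h.2.2.1

lemma norm_tangent (h : BoundaryParam Ω γ γ' γ'' L) (s : ℝ) : ‖γ' s‖ = 1 := h.2.2.2.1 s

lemma periodic (h : BoundaryParam Ω γ γ' γ'' L) : Function.Periodic γ L := h.2.2.2.2.1

lemma image_Ico (h : BoundaryParam Ω γ γ' γ'' L) : γ '' Ico 0 L = frontier Ω := h.2.2.2.2.2.1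

lemma tangent_eq (h : BoundaryParam Ω γ γ' γ'' L) (s : ℝ) : γ' s = γ' 0 + ∫ v in 0..s, γ'' v :=
  h.2.2.2.2.2.2.2.2 s

lemma intervalIntegrable (h : BoundaryParam Ω γ γ' γ'' L) (s t : ℝ) :
    IntervalIntegrable γ'' volume s t :=
  (h.2.2.2.2.2.2.2.1 s).symm.trans (h.2.2.2.2.2.2.2.1 t)

lemma continuous (h : BoundaryParam Ω γ γ' γ'' L) : Continuous γ :=
  continuous_iff_continuousAt.2 fun s => (h.hasDerivAt s).continuousAt

lemma mem_frontier (h : BoundaryParam Ω γ γ' γ'' L) (s : ℝ) : γ s ∈ frontier Ω := by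
  obtain ⟨u, hu, hsu⟩ := h.periodic.exists_mem_Ico₀ h.length_pos s
  rw [hsu, ← h.image_Ico]
  exact mem_image_of_mem _ hu

lemma mem_closure (h : BoundaryParam Ω γ γ' γ'' L) (s : ℝ) : γ s ∈ closure Ω :=
  frontier_subset_closure (h.mem_frontier s)

lemma norm_sub_le (h : BoundaryParam Ω γ γ' γ'' L) (s u : ℝ) : ‖γ u - γ s‖ ≤ |u - s| := by
  simpa using convex_univ.norm_image_sub_le_of_norm_hasDerivWithin_le
    (fun x _ => (h.hasDerivAt x).hasDerivWithinAt) (fun x _ => (h.norm_tangent x).le)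
    (mem_univ s) (mem_univ u)

lemma tangent_sub (h : BoundaryParam Ω γ γ' γ'' L) (s t : ℝ) :
    γ' t - γ' s = ∫ v in s..t, γ'' v := by
  rw [h.tangent_eq t, h.tangent_eq s, add_sub_add_left_eq_sub,
    intervalIntegral.integral_interval_sub_left (h.intervalIntegrable 0 t)
      (h.intervalIntegrable 0 s)]

lemma locallyIntegrable (h : BoundaryParam Ω γ γ' γ'' L) : LocallyIntegrable γ'' volume := by
  refine locallyIntegrable_iff.2 fun K hK => ?_
  obtain ⟨B, hB⟩ := hK.isBounded.subset_closedBall 0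
  rw [Real.closedBall_eq_Icc] at hB
  have hint := (intervalIntegrable_iff' (by simp)).1 (h.intervalIntegrable (0 - B) (0 + B))
  exact hint.mono_set (hB.trans Icc_subset_uIcc)

lemma ae_hasDerivAt_tangent (h : BoundaryParam Ω γ γ' γ'' L) :
    ∀ᵐ s, HasDerivAt γ' (γ'' s) s := by
  filter_upwards [LocallyIntegrable.ae_hasDerivAt_integral h.locallyIntegrable] with s hs
  exact ((hs 0).const_add (γ' 0)).congr_of_eventuallyEq (Filter.Eventually.of_forall h.tangent_eq)

lemma tangent_periodic (h : BoundaryParam Ω γ γ' γ'' L) : Function.Periodic γ' L := fun s =>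
  ((h.hasDerivAt (s + L)).comp_add_const s L).unique
    (by simpa only [h.periodic _] using h.hasDerivAt s)

lemma ae_le_norm_curvature (h : BoundaryParam Ω γ γ' γ'' L) {a : ℝ}
    (ha : ∀ᵐ s ∂volume.restrict (Icc 0 L), a ≤ ‖γ'' s‖) : ∀ᵐ s, a ≤ ‖γ'' s‖ := by
  have hIcc : ∀ᵐ s, s ∈ Icc 0 L → HasDerivAt γ' (γ'' s) s ∧ a ≤ ‖γ'' s‖ := by
    filter_upwards [h.ae_hasDerivAt_tangent, (ae_restrict_iff' measurableSet_Icc).1 ha]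
      with s hs hle hmem using ⟨hs, hle hmem⟩
  have hshift : ∀ᵐ s, ∀ k : ℤ, s - k * L ∈ Icc 0 L →
      HasDerivAt γ' (γ'' (s - k * L)) (s - k * L) ∧ a ≤ ‖γ'' (s - k * L)‖ :=
    ae_all_iff.2 fun k =>
      (measurePreserving_sub_right volume ((k : ℝ) * L)).quasiMeasurePreserving.ae hIcc
  filter_upwards [h.ae_hasDerivAt_tangent, hshift] with s hs hk
  have hmem := sub_toIcoDiv_zsmul_mem_Ico h.length_pos 0 s
  rw [zero_add, zsmul_eq_mul] at hmem
  obtain ⟨hderiv, hle⟩ := hk _ (Ico_subset_Icc_self hmem)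
  have hs' := hderiv.comp_sub_const s _
  rw [funext fun x => h.tangent_periodic.sub_int_mul_eq _] at hs'
  rwa [hs'.unique hs] at hle

lemma inner_tangent_deriv (h : BoundaryParam Ω γ γ' γ'' L) {s : ℝ} {k : E2}
    (hk : HasDerivAt γ' k s) : ⟪γ' s, k⟫ = 0 := by
  have hconst : (fun t => ⟪γ' t, γ' t⟫) = fun _ => (1 : ℝ) := funext fun t => by
    rw [real_inner_self_eq_norm_sq, h.norm_tangent, one_pow]
  have hderiv := (hk.inner ℝ hk).unique (hconst ▸ hasDerivAt_const s (1 : ℝ))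
  rw [real_inner_comm k (γ' s)] at hderiv
  rw [real_inner_comm]
  linarith

variable (o : Orientation ℝ E2 (Fin 2))

lemma exists_forall_mul_inner_lt (h : BoundaryParam Ω γ γ' γ'' L) (hconv : Convex ℝ Ω)
    (hopen : IsOpen Ω) (s : ℝ) : ∃ c : ℝ, ∀ y ∈ Ω,
      c * ⟪y, o.rightAngleRotation (γ' s)⟫ < c * ⟪γ s, o.rightAngleRotation (γ' s)⟫ := by
  have hnot : γ s ∉ Ω := (hopen.frontier_eq ▸ h.mem_frontier s).2
  obtain ⟨w, hw⟩ := exists_forall_inner_lt hconv hopen hnot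
  have horth : ⟪γ' s, w⟫ = 0 := inner_deriv_eq_zero_of_forall_inner_le (h.hasDerivAt s)
    fun u => inner_le_of_mem_closure (fun y hy => (hw y hy).le) (h.mem_closure u)
  refine ⟨⟪w, o.rightAngleRotation (γ' s)⟫, fun y hy => ?_⟩
  have hlt := hw y hy
  rwa [eq_inner_rightAngleRotation_smul o (h.norm_tangent s) horth, real_inner_smul_right,
    real_inner_smul_right] at hlt

lemma inner_le_of_inner_pos (h : BoundaryParam Ω γ γ' γ'' L) (hconv : Convex ℝ Ω)
    (hopen : IsOpen Ω) (h0 : 0 ∈ Ω) {s : ℝ} (hs : 0 < ⟪γ s, o.rightAngleRotation (γ' s)⟫)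
    {y : E2} (hy : y ∈ closure Ω) :
    ⟪y, o.rightAngleRotation (γ' s)⟫ ≤ ⟪γ s, o.rightAngleRotation (γ' s)⟫ := by
  obtain ⟨c, hc⟩ := h.exists_forall_mul_inner_lt o hconv hopen s
  have hcpos : 0 < c := pos_of_mul_pos_left (by simpa using hc 0 h0) hs.le
  exact inner_le_of_mem_closure (fun z hz => (lt_of_mul_lt_mul_left (hc z hz) hcpos.le).le) hy

/-- The sign of `⟪γ s, J (γ' s)⟫`, `J` the rotation by a right angle, is that of the outer normal;
being continuous and nonzero this inner product has the same sign at every `s`. -/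
lemma exists_orientation (h : BoundaryParam Ω γ γ' γ'' L) (hconv : Convex ℝ Ω)
    (hopen : IsOpen Ω) (h0 : 0 ∈ Ω) : ∃ o : Orientation ℝ E2 (Fin 2), ∀ s, ∀ y ∈ closure Ω,
      ⟪y, o.rightAngleRotation (γ' s)⟫ ≤ ⟪γ s, o.rightAngleRotation (γ' s)⟫ := by
  suffices ∃ o : Orientation ℝ E2 (Fin 2), ∀ s, 0 < ⟪γ s, o.rightAngleRotation (γ' s)⟫ from
    this.imp fun o ho s y => h.inner_le_of_inner_pos o hconv hopen h0 (ho s)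
  let o := (EuclideanSpace.basisFun (Fin 2) ℝ).toBasis.orientation
  have hcont : Continuous fun s => ⟪γ s, o.rightAngleRotation (γ' s)⟫ :=
    h.continuous.inner (o.rightAngleRotation.continuous.comp h.continuous_tangent)
  have hne : ∀ s, ⟪γ s, o.rightAngleRotation (γ' s)⟫ ≠ 0 := fun s hs => by
    obtain ⟨c, hc⟩ := h.exists_forall_mul_inner_lt o hconv hopen s
    simpa [hs] using hc 0 h0
  by_cases hpos : ∀ s, 0 < ⟪γ s, o.rightAngleRotation (γ' s)⟫
  · exact ⟨o, hpos⟩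
  · obtain ⟨s, hs⟩ := not_forall.1 hpos
    refine ⟨-o, fun u => ?_⟩
    rw [o.rightAngleRotation_neg_orientation, inner_neg_right, neg_pos]
    by_contra! hu
    obtain ⟨v, hv⟩ := mem_range_of_exists_le_of_exists_ge hcont ⟨s, not_lt.1 hs⟩ ⟨u, hu⟩
    exact hne v hv

end BoundaryParam

/-- A bounded convex domain containing the origin, with an arclength parametrization `γ` of its
boundary whose curvature is bounded below. Here `γ'` is the unit tangent, `γ''` the curvature
vector, `n` the outer unit normal, `L` the length, `a` the lower bound for the curvature, and `r`
and `R` are an inner and an outer radius about the origin. -/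
structure CurvedBoundary (Ω : Set E2) (γ γ' γ'' n : ℝ → E2) (L a r R : ℝ) : Prop where
  convex : Convex ℝ Ω
  innerRadius_pos : 0 < r
  closedBall_subset : Metric.closedBall 0 r ⊆ Ω
  subset_closedBall : Ω ⊆ Metric.closedBall 0 R
  param : BoundaryParam Ω γ γ' γ'' L
  normal_eq : ∃ o : Orientation ℝ E2 (Fin 2), ∀ s, n s = o.rightAngleRotation (γ' s)
  inner_normal_le : ∀ s, ∀ y ∈ closure Ω, ⟪y, n s⟫ ≤ ⟪γ s, n s⟫
  curvature_pos : 0 < a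
  curvature_ge : ∀ᵐ s, ∃ k, a ≤ k ∧ γ'' s = -(k • n s)

/-- The curvature vector is orthogonal to the tangent, and it points inwards because
`⟪γ u - γ s, n u - n s⟫ ≥ 0` by convexity. -/
lemma BoundaryParam.exists_curvature_eq {Ω : Set E2} {γ γ' γ'' : ℝ → E2} {L : ℝ}
    (h : BoundaryParam Ω γ γ' γ'' L) {o : Orientation ℝ E2 (Fin 2)}
    (ho : ∀ s, ∀ y ∈ closure Ω,
      ⟪y, o.rightAngleRotation (γ' s)⟫ ≤ ⟪γ s, o.rightAngleRotation (γ' s)⟫)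
    {s : ℝ} {v : E2} (hv : HasDerivAt γ' v s) :
    v = -(‖v‖ • o.rightAngleRotation (γ' s)) := by
  have heq := eq_inner_rightAngleRotation_smul o (h.norm_tangent s) (h.inner_tangent_deriv hv)
  have hn : HasDerivAt (fun u => o.rightAngleRotation (γ' u)) (o.rightAngleRotation v) s :=
    o.rightAngleRotation.toContinuousLinearEquiv.hasFDerivAt.comp_hasDerivAt s hv
  have hinward : ⟪v, o.rightAngleRotation (γ' s)⟫ ≤ 0 := by
    have hnonneg := inner_deriv_nonneg_of_forall_inner_sub_nonneg (h.hasDerivAt s) hn fun u => by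
      have hs := ho s _ (h.mem_closure u)
      have hu := ho u _ (h.mem_closure s)
      rw [inner_sub_left, inner_sub_right, inner_sub_right]
      linarith
    rw [o.inner_rightAngleRotation_swap, real_inner_comm] at hnonneg
    linarith
  have hnorm : ‖v‖ = -⟪v, o.rightAngleRotation (γ' s)⟫ := by
    conv_lhs => rw [heq]
    rw [norm_smul, LinearIsometryEquiv.norm_map, h.norm_tangent, mul_one,
      Real.norm_of_nonpos hinward]
  rw [hnorm, neg_smul, neg_neg]
  exact heq

lemma exists_curvedBoundary {Ω : Set E2} (hconv : Convex ℝ Ω) (hopen : IsOpen Ω)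
    (hbdd : Bornology.IsBounded Ω) (h0 : 0 ∈ Ω) {γ γ' γ'' : ℝ → E2} {L : ℝ}
    (h : BoundaryParam Ω γ γ' γ'' L) {a : ℝ} (ha : 0 < a)
    (hlow : ∀ᵐ s ∂volume.restrict (Icc 0 L), a ≤ ‖γ'' s‖) :
    ∃ (n : ℝ → E2) (r R : ℝ), CurvedBoundary Ω γ γ' γ'' n L a r R := by
  obtain ⟨r, hr, hball⟩ := Metric.nhds_basis_closedBall.mem_iff.1 (hopen.mem_nhds h0)
  obtain ⟨R, hR⟩ := hbdd.subset_closedBall 0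
  obtain ⟨o, ho⟩ := h.exists_orientation hconv hopen h0
  refine ⟨fun s => o.rightAngleRotation (γ' s), r, R, hconv, hr, hball, hR, h, ⟨o, fun _ => rfl⟩,
    ho, ha, ?_⟩
  filter_upwards [h.ae_hasDerivAt_tangent, h.ae_le_norm_curvature hlow] with s hs hle
  exact ⟨‖γ'' s‖, hle, h.exists_curvature_eq ho hs⟩

namespace CurvedBoundary

variable {Ω : Set E2} {γ γ' γ'' n : ℝ → E2} {L a r R : ℝ}

lemma zero_mem (b : CurvedBoundary Ω γ γ' γ'' n L a r R) : 0 ∈ Ω :=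
  b.closedBall_subset (Metric.mem_closedBall_self b.innerRadius_pos.le)

lemma isBounded (b : CurvedBoundary Ω γ γ' γ'' n L a r R) : Bornology.IsBounded Ω :=
  Metric.isBounded_closedBall.subset b.subset_closedBall

lemma norm_le (b : CurvedBoundary Ω γ γ' γ'' n L a r R) (s : ℝ) : ‖γ s‖ ≤ R :=
  mem_closedBall_zero_iff.1
    (closure_minimal b.subset_closedBall Metric.isClosed_closedBall (b.param.mem_closure s))

lemma norm_sub_le (b : CurvedBoundary Ω γ γ' γ'' n L a r R) {y : E2} (hy : y ∈ closure Ω)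
    (s : ℝ) : ‖y - γ s‖ ≤ 2 * R := by
  have hyR := closure_minimal b.subset_closedBall Metric.isClosed_closedBall hy
  linarith [_root_.norm_sub_le y (γ s), mem_closedBall_zero_iff.1 hyR, b.norm_le s]

lemma norm_normal (b : CurvedBoundary Ω γ γ' γ'' n L a r R) (s : ℝ) : ‖n s‖ = 1 := by
  obtain ⟨o, ho⟩ := b.normal_eq
  rw [ho, LinearIsometryEquiv.norm_map, b.param.norm_tangent]

lemma norm_normal_sub (b : CurvedBoundary Ω γ γ' γ'' n L a r R) (s u : ℝ) :
    ‖n s - n u‖ = ‖γ' s - γ' u‖ := by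
  obtain ⟨o, ho⟩ := b.normal_eq
  rw [ho, ho, ← map_sub, LinearIsometryEquiv.norm_map]

lemma inner_tangent_normal (b : CurvedBoundary Ω γ γ' γ'' n L a r R) (s : ℝ) :
    ⟪γ' s, n s⟫ = 0 := by
  obtain ⟨o, ho⟩ := b.normal_eq
  rw [ho, o.inner_rightAngleRotation_right, o.areaForm_apply_self, neg_zero]

lemma inner_smul_tangent_add_inner_smul_normal (b : CurvedBoundary Ω γ γ' γ'' n L a r R) (s : ℝ)
    (v : E2) : ⟪v, γ' s⟫ • γ' s + ⟪v, n s⟫ • n s = v := by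
  obtain ⟨o, ho⟩ := b.normal_eq
  rw [ho]
  exact inner_smul_add_inner_rightAngleRotation_smul o (b.param.norm_tangent s) v

lemma eq_inner_smul_normal (b : CurvedBoundary Ω γ γ' γ'' n L a r R) {s : ℝ} {v : E2}
    (hv : ⟪γ' s, v⟫ = 0) : v = ⟪v, n s⟫ • n s := by
  have h := b.inner_smul_tangent_add_inner_smul_normal s v
  rwa [real_inner_comm, hv, zero_smul, zero_add, eq_comm] at h

lemma norm_sq_eq (b : CurvedBoundary Ω γ γ' γ'' n L a r R) (s : ℝ) (v : E2) :
    ‖v‖ ^ 2 = ⟪v, γ' s⟫ ^ 2 + ⟪v, n s⟫ ^ 2 := by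
  rw [← real_inner_self_eq_norm_sq]
  nth_rw 2 [← b.inner_smul_tangent_add_inner_smul_normal s v]
  rw [inner_add_right, real_inner_smul_right, real_inner_smul_right, ← pow_two, ← pow_two]

lemma innerRadius_le_inner (b : CurvedBoundary Ω γ γ' γ'' n L a r R) (s : ℝ) :
    r ≤ ⟪γ s, n s⟫ := by
  have h := mul_norm_le_of_forall_inner_le b.innerRadius_pos.le fun y hy =>
    b.inner_normal_le s y (subset_closure (b.closedBall_subset hy))
  rwa [b.norm_normal, mul_one] at h

lemma innerRadius_le_norm (b : CurvedBoundary Ω γ γ' γ'' n L a r R) (s : ℝ) : r ≤ ‖γ s‖ := by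
  have h := real_inner_le_norm (γ s) (n s)
  rw [b.norm_normal, mul_one] at h
  exact (b.innerRadius_le_inner s).trans h

lemma outerRadius_pos (b : CurvedBoundary Ω γ γ' γ'' n L a r R) : 0 < R :=
  b.innerRadius_pos.trans_le ((b.innerRadius_le_norm 0).trans (b.norm_le 0))

lemma exists_eq_norm_smul_normal (b : CurvedBoundary Ω γ γ' γ'' n L a r R) {x : E2}
    (hx : x ≠ 0) : ∃ s ∈ Ico 0 L, x = ‖x‖ • n s := by
  obtain ⟨y, hy, hmax⟩ := b.isBounded.isCompact_closure.exists_isMaxOn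
    ⟨0, subset_closure b.zero_mem⟩ (f := fun y => ⟪y, x⟫) (by fun_prop)
  have hyfr : y ∈ frontier Ω :=
    ⟨hy, fun hint => notMem_interior_of_isMaxOn_inner hx hmax (interior_mono subset_closure hint)⟩
  rw [← b.param.image_Ico] at hyfr
  obtain ⟨s, hs, rfl⟩ := hyfr
  have horth : ⟪γ' s, x⟫ = 0 := inner_deriv_eq_zero_of_forall_inner_le (b.param.hasDerivAt s)
    fun u => hmax (b.param.mem_closure u)
  have hxn := b.eq_inner_smul_normal horth
  have hpos : 0 < ⟪x, n s⟫ := by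
    have hle : r * ‖x‖ ≤ ⟪γ s, x⟫ := mul_norm_le_of_forall_inner_le b.innerRadius_pos.le
      fun z hz => hmax (subset_closure (b.closedBall_subset hz))
    have h0 : 0 < ⟪γ s, x⟫ := (mul_pos b.innerRadius_pos (norm_pos_iff.2 hx)).trans_le hle
    rw [hxn, real_inner_smul_right] at h0
    exact pos_of_mul_pos_left h0 (b.innerRadius_pos.le.trans (b.innerRadius_le_inner s))
  refine ⟨s, hs, ?_⟩
  have hnorm := congrArg norm hxn
  rw [norm_smul, b.norm_normal, mul_one, Real.norm_of_nonneg hpos.le] at hnorm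
  rwa [hnorm]

end CurvedBoundary

/-! ### Uniform convexity -/

lemma le_of_forall_mul_deriv_nonneg {f f' : ℝ → ℝ} {s u : ℝ} (hf : ∀ x, HasDerivAt f (f' x) x)
    (h : ∀ x ∈ uIcc s u, 0 ≤ (x - s) * f' x) : f s ≤ f u := by
  have hc : Continuous f := continuous_iff_continuousAt.2 fun x => (hf x).continuousAt
  rcases le_total s u with hsu | hus
  · rw [uIcc_of_le hsu] at h
    refine monotoneOn_of_hasDerivWithinAt_nonneg (convex_Icc s u) hc.continuousOn
      (fun x _ => (hf x).hasDerivWithinAt) (fun x hx => ?_) (left_mem_Icc.2 hsu)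
      (right_mem_Icc.2 hsu) hsu
    rw [interior_Icc] at hx
    exact nonneg_of_mul_nonneg_right (h x (Ioo_subset_Icc_self hx)) (sub_pos.2 hx.1)
  · rw [uIcc_of_ge hus] at h
    refine antitoneOn_of_hasDerivWithinAt_nonpos (convex_Icc u s) hc.continuousOn
      (fun x _ => (hf x).hasDerivWithinAt) (fun x hx => ?_) (left_mem_Icc.2 hus)
      (right_mem_Icc.2 hus) hus
    rw [interior_Icc] at hx
    exact nonpos_of_mul_nonneg_right (h x (Ioo_subset_Icc_self hx)) (sub_neg.2 hx.2)

lemma suppFn_le_inner_add {Ω : Set E2} (hne : Ω.Nonempty) {p ν : E2} {c : ℝ} (hc : 0 < c)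
    (hp : ∀ z ∈ Ω, c * ‖z - p‖ ^ 2 ≤ ⟪p - z, ν⟫) {x : E2} (hx : x ≠ 0) (hxν : x = ‖x‖ • ν)
    (y : E2) : suppFn Ω y ≤ ⟪p, y⟫ + 1 / (4 * c) * ‖y - x‖ ^ 2 / ‖x‖ := by
  have : 0 < ‖x‖ := norm_pos_iff.2 hx
  refine suppFn_le hne fun z hz => ?_
  have hquad : ⟪p - z, x⟫ = ‖x‖ * ⟪p - z, ν⟫ := by
    conv_lhs => rw [hxν]
    exact real_inner_smul_right _ _ _
  have hyoung : ‖z - p‖ * ‖y - x‖ ≤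
      ‖x‖ * (c * ‖z - p‖ ^ 2) + 1 / (4 * c) * ‖y - x‖ ^ 2 / ‖x‖ := by
    have hsq : 0 ≤ (2 * c * ‖x‖ * ‖z - p‖ - ‖y - x‖) ^ 2 / (4 * c * ‖x‖) := by positivity
    have heq : (2 * c * ‖x‖ * ‖z - p‖ - ‖y - x‖) ^ 2 / (4 * c * ‖x‖) = ‖x‖ * (c * ‖z - p‖ ^ 2) +
        1 / (4 * c) * ‖y - x‖ ^ 2 / ‖x‖ - ‖z - p‖ * ‖y - x‖ := by
      field_simp
      ring
    linarith
  calc ⟪z, y⟫ = ⟪p, y⟫ + ⟪z - p, y - x⟫ - ⟪p - z, x⟫ := by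
        simp only [inner_sub_left, inner_sub_right]
        ring
    _ ≤ ⟪p, y⟫ + ‖z - p‖ * ‖y - x‖ - ‖x‖ * (c * ‖z - p‖ ^ 2) := by
        rw [hquad]
        gcongr
        · exact real_inner_le_norm _ _
        · exact hp z hz
    _ ≤ ⟪p, y⟫ + 1 / (4 * c) * ‖y - x‖ ^ 2 / ‖x‖ := by linarith

namespace CurvedBoundary

variable {Ω : Set E2} {γ γ' γ'' n : ℝ → E2} {L a r R : ℝ}

lemma exists_forall_norm_tangent_sub_le (b : CurvedBoundary Ω γ γ' γ'' n L a r R) :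
    ∃ η, 0 < η ∧ ∀ s u, |u - s| ≤ η → ‖γ' u - γ' s‖ ≤ 1 := by
  obtain ⟨δ, hδ, hclose⟩ := Metric.uniformContinuous_iff_le.1
    (uniformContinuous_of_periodic b.param.length_pos b.param.tangent_periodic
      b.param.continuous_tangent) 1 one_pos
  exact ⟨δ, hδ, fun s u hu => dist_eq_norm (γ' u) (γ' s) ▸ hclose hu⟩

lemma mul_sub_le_inner_tangent_sub_normal (b : CurvedBoundary Ω γ γ' γ'' n L a r R) {s u w : ℝ}
    (huw : u ≤ w) (h : ∀ v ∈ Icc u w, 1 / 2 ≤ ⟪n v, n s⟫) :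
    a / 2 * (w - u) ≤ ⟪γ' u - γ' w, n s⟫ := by
  have hint : IntervalIntegrable (fun v => -(innerSL ℝ (n s) (γ'' v))) volume u w :=
    IntervalIntegrable.neg ⟨(innerSL ℝ (n s)).integrable_comp (b.param.intervalIntegrable u w).1,
      (innerSL ℝ (n s)).integrable_comp (b.param.intervalIntegrable u w).2⟩
  calc a / 2 * (w - u) = ∫ _ in u..w, a / 2 := by
        rw [intervalIntegral.integral_const, smul_eq_mul, mul_comm]
    _ ≤ ∫ v in u..w, -(innerSL ℝ (n s) (γ'' v)) := by
        refine intervalIntegral.integral_mono_ae_restrict huw intervalIntegrable_const hint ?_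
        rw [Filter.EventuallyLE, ae_restrict_iff' measurableSet_Icc]
        filter_upwards [b.curvature_ge] with v ⟨k, hk, hv⟩ hvm
        rw [hv, map_neg, neg_neg, map_smul, innerSL_apply_apply, real_inner_comm, smul_eq_mul]
        nlinarith [h v hvm, b.curvature_pos]
    _ = ⟪γ' u - γ' w, n s⟫ := by
        rw [intervalIntegral.integral_neg,
          (innerSL ℝ (n s)).intervalIntegral_comp_comm (b.param.intervalIntegrable u w),
          ← b.param.tangent_sub, ← map_neg, neg_sub, innerSL_apply_apply, real_inner_comm]

lemma mul_sq_le_inner_sub_normal (b : CurvedBoundary Ω γ γ' γ'' n L a r R) {s u : ℝ}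
    (h : ∀ v ∈ uIcc s u, 1 / 2 ≤ ⟪n v, n s⟫) :
    a / 4 * (u - s) ^ 2 ≤ ⟪γ s - γ u, n s⟫ := by
  have hderiv (x : ℝ) : HasDerivAt (fun x => ⟪γ s - γ x, n s⟫ - a / 4 * (x - s) ^ 2)
      (⟪γ' s - γ' x, n s⟫ - a / 2 * (x - s)) x := by
    have hinner : HasDerivAt (fun x => ⟪γ s - γ x, n s⟫) (-⟪γ' x, n s⟫) x := by
      simpa using ((b.param.hasDerivAt x).const_sub (γ s)).inner ℝ (hasDerivAt_const x (n s))
    have hsq : HasDerivAt (fun x => a / 4 * (x - s) ^ 2) (a / 2 * (x - s)) x :=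
      ((((hasDerivAt_id x).sub_const s).pow 2).const_mul (a / 4)).congr_deriv (by
        simp only [id]
        ring)
    refine (hinner.sub hsq).congr_deriv ?_
    rw [inner_sub_left, b.inner_tangent_normal, zero_sub]
  have hle := le_of_forall_mul_deriv_nonneg hderiv (s := s) (u := u) fun x hx => ?_
  · simpa using hle
  have hsub : uIcc s x ⊆ uIcc s u := uIcc_subset_uIcc_left hx
  rcases le_total s x with hsx | hxs
  · rw [uIcc_of_le hsx] at hsub
    exact mul_nonneg (sub_nonneg.2 hsx) (sub_nonneg.2
      (b.mul_sub_le_inner_tangent_sub_normal hsx fun v hv => h v (hsub hv)))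
  · rw [uIcc_of_ge hxs] at hsub
    have hge := b.mul_sub_le_inner_tangent_sub_normal hxs fun v hv => h v (hsub hv)
    rw [← neg_sub (γ' s), inner_neg_left] at hge
    exact mul_nonneg_of_nonpos_of_nonpos (sub_nonpos.2 hxs) (by linarith)

lemma exists_inner_sub_tangent_eq (b : CurvedBoundary Ω γ γ' γ'' n L a r R) {s η d : ℝ}
    (h : ∀ u, |u - s| ≤ η → 1 / 2 ≤ ⟪γ' u, γ' s⟫) (hd : |d| ≤ η / 2) :
    ∃ u, |u - s| ≤ η ∧ ⟪γ u - γ s, γ' s⟫ = d := by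
  have hderiv (u : ℝ) : HasDerivAt (fun u => ⟪γ u - γ s, γ' s⟫) ⟪γ' u, γ' s⟫ u := by
    simpa using ((b.param.hasDerivAt u).sub_const (γ s)).inner ℝ (hasDerivAt_const u (γ' s))
  have hc : Continuous fun u => ⟪γ u - γ s, γ' s⟫ :=
    continuous_iff_continuousAt.2 fun u => (hderiv u).continuousAt
  have hη : 0 ≤ η := by linarith [abs_nonneg d]
  have hs : s ∈ Icc (s - η) (s + η) := ⟨by linarith, by linarith⟩
  have hgrow : ∀ u ∈ Icc (s - η) (s + η), ∀ w ∈ Icc (s - η) (s + η), u ≤ w →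
      1 / 2 * (w - u) ≤ ⟪γ w - γ s, γ' s⟫ - ⟪γ u - γ s, γ' s⟫ :=
    (convex_Icc _ _).mul_sub_le_image_sub_of_le_deriv hc.continuousOn
      (fun u _ => (hderiv u).differentiableAt.differentiableWithinAt) fun u hu => by
        rw [(hderiv u).deriv]
        rw [interior_Icc] at hu
        exact h u (abs_le.2 ⟨by linarith [hu.1], by linarith [hu.2]⟩)
  have hright := hgrow s hs (s + η) ⟨by linarith, le_rfl⟩ hs.2
  have hleft := hgrow (s - η) ⟨le_rfl, by linarith⟩ s hs hs.1
  rw [sub_self, inner_zero_left] at hright hleft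
  obtain ⟨hd1, hd2⟩ := abs_le.1 hd
  obtain ⟨u, hu, hud⟩ := intermediate_value_Icc (hs.1.trans hs.2) hc.continuousOn
    (show d ∈ Icc _ _ from ⟨by linarith, by linarith⟩)
  exact ⟨u, abs_le.2 ⟨by linarith [hu.1], by linarith [hu.2]⟩, hud⟩

/-- Compare `y` with the boundary point `γ u` having the same tangential component at `γ s`: `y`
lies below `γ u` in the direction `n s`, since it lies below the tangent line at `γ u`. -/
lemma mul_sq_inner_tangent_le (b : CurvedBoundary Ω γ γ' γ'' n L a r R) {s η : ℝ}
    (h : ∀ u, |u - s| ≤ η → ‖γ' u - γ' s‖ ≤ 1) {y : E2} (hy : y ∈ closure Ω)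
    (hyη : |⟪y - γ s, γ' s⟫| ≤ η / 2) :
    a / 4 * ⟪y - γ s, γ' s⟫ ^ 2 ≤ ⟪γ s - y, n s⟫ := by
  have hn (u : ℝ) (hu : |u - s| ≤ η) : 1 / 2 ≤ ⟪n u, n s⟫ :=
    half_le_inner (b.norm_normal u) (b.norm_normal s) ((b.norm_normal_sub u s).trans_le (h u hu))
  obtain ⟨u, hu, huy⟩ := b.exists_inner_sub_tangent_eq (fun u hu =>
    half_le_inner (b.param.norm_tangent u) (b.param.norm_tangent s) (h u hu)) hyη
  have hlip : |⟪y - γ s, γ' s⟫| ≤ |u - s| := by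
    rw [← huy]
    refine (abs_real_inner_le_norm _ _).trans ?_
    rw [b.param.norm_tangent, mul_one]
    exact b.param.norm_sub_le s u
  have hcurve : a / 4 * (u - s) ^ 2 ≤ ⟪γ s - γ u, n s⟫ :=
    b.mul_sq_le_inner_sub_normal fun v hv => hn v ((abs_sub_left_of_mem_uIcc hv).trans hu)
  have hbelow : 0 ≤ ⟪γ u - y, n s⟫ := by
    have hnormal : γ u - y = ⟪γ u - y, n s⟫ • n s := by
      refine b.eq_inner_smul_normal ?_
      rw [real_inner_comm, ← sub_sub_sub_cancel_right _ _ (γ s), inner_sub_left, huy, sub_self]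
    have hsupp : 0 ≤ ⟪γ u - y, n u⟫ := by
      rw [inner_sub_left]
      exact sub_nonneg.2 (b.inner_normal_le u y hy)
    rw [hnormal, real_inner_smul_left, real_inner_comm (n u)] at hsupp
    exact nonneg_of_mul_nonneg_left hsupp (by linarith [hn u hu])
  calc a / 4 * ⟪y - γ s, γ' s⟫ ^ 2 ≤ a / 4 * (u - s) ^ 2 := by
        have := b.curvature_pos
        gcongr a / 4 * ?_
        exact sq_le_sq.2 hlip
    _ ≤ ⟪γ s - γ u, n s⟫ + ⟪γ u - y, n s⟫ := by linarith
    _ = ⟪γ s - y, n s⟫ := by rw [← inner_add_left, sub_add_sub_cancel]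

lemma mul_sq_inner_tangent_le_of_mul_abs_le (b : CurvedBoundary Ω γ γ' γ'' n L a r R)
    {s η l : ℝ} (h : ∀ u, |u - s| ≤ η → ‖γ' u - γ' s‖ ≤ 1) (hl : 0 < l) (hl1 : l ≤ 1) {y : E2}
    (hy : y ∈ closure Ω) (hyη : l * |⟪y - γ s, γ' s⟫| ≤ η / 2) :
    a * l / 4 * ⟪y - γ s, γ' s⟫ ^ 2 ≤ ⟪γ s - y, n s⟫ := by
  have hmem : γ s + l • (y - γ s) ∈ closure Ω :=
    b.convex.closure.add_smul_sub_mem (b.param.mem_closure s) hy ⟨hl.le, hl1⟩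
  have hle := b.mul_sq_inner_tangent_le h hmem (by
    rwa [add_sub_cancel_left, real_inner_smul_left, abs_mul, abs_of_pos hl])
  rw [sub_add_cancel_left, add_sub_cancel_left, ← smul_neg, neg_sub, real_inner_smul_left,
    real_inner_smul_left] at hle
  refine le_of_mul_le_mul_left ?_ hl
  calc l * (a * l / 4 * ⟪y - γ s, γ' s⟫ ^ 2) = a / 4 * (l * ⟪y - γ s, γ' s⟫) ^ 2 := by ring
    _ ≤ l * ⟪γ s - y, n s⟫ := hle

lemma exists_forall_mul_norm_sq_le (b : CurvedBoundary Ω γ γ' γ'' n L a r R) :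
    ∃ c, 0 < c ∧ ∀ s, ∀ y ∈ closure Ω, c * ‖y - γ s‖ ^ 2 ≤ ⟪γ s - y, n s⟫ := by
  obtain ⟨η, hη, hclose⟩ := b.exists_forall_norm_tangent_sub_le
  have ha := b.curvature_pos
  have hR := b.outerRadius_pos
  set l := min 1 (η / (4 * R))
  have hl : 0 < l := by positivity
  refine ⟨(4 / (a * l) + 2 * R)⁻¹, by positivity, fun s y hy => ?_⟩
  have hlη : l * |⟪y - γ s, γ' s⟫| ≤ η / 2 := by
    have hle := abs_real_inner_le_norm (y - γ s) (γ' s)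
    rw [b.param.norm_tangent, mul_one] at hle
    calc l * |⟪y - γ s, γ' s⟫| ≤ η / (4 * R) * (2 * R) := by
          gcongr
          · exact min_le_right _ _
          · exact hle.trans (b.norm_sub_le hy s)
      _ = η / 2 := by
          field_simp
          norm_num
  have htangent : ⟪y - γ s, γ' s⟫ ^ 2 ≤ 4 / (a * l) * ⟪γ s - y, n s⟫ := by
    have hle := b.mul_sq_inner_tangent_le_of_mul_abs_le (hclose s) hl (min_le_left _ _) hy hlη
    rw [div_mul_eq_mul_div, le_div_iff₀ (by positivity)]
    linarith
  have hnormal : ⟪γ s - y, n s⟫ ^ 2 ≤ 2 * R * ⟪γ s - y, n s⟫ := by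
    have hnonneg : 0 ≤ ⟪γ s - y, n s⟫ := by
      rw [inner_sub_left]
      exact sub_nonneg.2 (b.inner_normal_le s y hy)
    have hle := real_inner_le_norm (γ s - y) (n s)
    rw [b.norm_normal, mul_one, norm_sub_rev] at hle
    rw [pow_two]
    gcongr
    exact hle.trans (b.norm_sub_le hy s)
  rw [inv_mul_le_iff₀ (by positivity), b.norm_sq_eq s, ← neg_sub (γ s) y, inner_neg_left _ (n s),
    neg_sq, add_mul, neg_sub]
  exact add_le_add htangent hnormal

lemma exists_forall_suppFn_le (b : CurvedBoundary Ω γ γ' γ'' n L a r R) :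
    ∃ c, 0 < c ∧ ∀ s x, x ≠ 0 → x = ‖x‖ • n s → ∀ y,
      suppFn Ω y ≤ ⟪γ s, y⟫ + c * ‖y - x‖ ^ 2 / ‖x‖ := by
  obtain ⟨c, hc, hconv⟩ := b.exists_forall_mul_norm_sq_le
  exact ⟨1 / (4 * c), by positivity, fun s x hx hxn y => suppFn_le_inner_add ⟨0, b.zero_mem⟩ hc
    (fun z hz => hconv s z (subset_closure hz)) hx hxn y⟩

lemma mul_sub_le_abs_det (b : CurvedBoundary Ω γ γ' γ'' n L a r R) {s t : ℝ} (h : s ≤ t)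
    (hts : t - s ≤ r / 2) : r / 2 * (t - s) ≤ |γ s 0 * γ t 1 - γ s 1 * γ t 0| := by
  obtain ⟨o, ho⟩ := b.normal_eq
  have hderiv (u : ℝ) : HasDerivAt (fun u => ⟪γ s, o.rightAngleRotation (γ u)⟫) ⟪γ s, n u⟫ u := by
    have hrot := o.rightAngleRotation.toContinuousLinearEquiv.hasFDerivAt.comp_hasDerivAt u
      (b.param.hasDerivAt u)
    simpa [ho] using (hasDerivAt_const u (γ s)).inner ℝ hrot
  have hgrow := (convex_Icc s t).mul_sub_le_image_sub_of_le_deriv (C := r / 2)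
    (fun u _ => (hderiv u).continuousAt.continuousWithinAt)
    (fun u _ => (hderiv u).differentiableAt.differentiableWithinAt) (fun u hu => ?_)
    s ⟨le_rfl, h⟩ t ⟨h, le_rfl⟩ h
  · rw [o.inner_rightAngleRotation_right (γ s) (γ s), o.areaForm_apply_self, neg_zero, sub_zero,
      o.inner_rightAngleRotation_right] at hgrow
    rw [← abs_areaForm_eq o, ← abs_neg]
    exact hgrow.trans (le_abs_self _)
  rw [interior_Icc] at hu
  rw [(hderiv u).deriv]
  have hdiff : ⟪γ u - γ s, n u⟫ ≤ u - s := by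
    have hle := real_inner_le_norm (γ u - γ s) (n u)
    rw [b.norm_normal, mul_one] at hle
    exact hle.trans ((b.param.norm_sub_le s u).trans_eq (abs_of_pos (sub_pos.2 hu.1)))
  rw [inner_sub_left] at hdiff
  linarith [b.innerRadius_le_inner u, hu.2]

end CurvedBoundary

/-! ### The boundary of the dilated polar set -/

/-- The point in the direction `n s` on the boundary of the dilate `t • polarSet Ω`. It does not
depend on the length of `n s`. -/
def polarCurve (Ω : Set E2) (n : ℝ → E2) (t s : ℝ) : E2 := (t / suppFn Ω (n s)) • n s

namespace CurvedBoundary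

variable {Ω : Set E2} {γ γ' γ'' n : ℝ → E2} {L a r R t : ℝ}

lemma suppFn_le_mul_norm (b : CurvedBoundary Ω γ γ' γ'' n L a r R) (x : E2) :
    suppFn Ω x ≤ R * ‖x‖ :=
  suppFn_le ⟨0, b.zero_mem⟩ fun y hy => (real_inner_le_norm y x).trans
    (mul_le_mul_of_nonneg_right (mem_closedBall_zero_iff.1 (b.subset_closedBall hy))
      (norm_nonneg x))

lemma innerRadius_mul_norm_le_suppFn (b : CurvedBoundary Ω γ γ' γ'' n L a r R) (x : E2) :
    r * ‖x‖ ≤ suppFn Ω x :=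
  mul_norm_le_suppFn b.innerRadius_pos.le b.closedBall_subset b.isBounded x

lemma innerRadius_le_suppFn_normal (b : CurvedBoundary Ω γ γ' γ'' n L a r R) (s : ℝ) :
    r ≤ suppFn Ω (n s) := by
  simpa [b.norm_normal] using b.innerRadius_mul_norm_le_suppFn (n s)

lemma suppFn_normal_pos (b : CurvedBoundary Ω γ γ' γ'' n L a r R) (s : ℝ) :
    0 < suppFn Ω (n s) :=
  b.innerRadius_pos.trans_le (b.innerRadius_le_suppFn_normal s)

lemma suppFn_polarCurve (b : CurvedBoundary Ω γ γ' γ'' n L a r R) (ht : 0 ≤ t) (s : ℝ) :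
    suppFn Ω (polarCurve Ω n t s) = t := by
  have hpos := b.suppFn_normal_pos s
  rw [polarCurve, suppFn_smul_of_nonneg (by positivity), div_mul_cancel₀ _ hpos.ne']

lemma norm_polarCurve (b : CurvedBoundary Ω γ γ' γ'' n L a r R) (ht : 0 ≤ t) (s : ℝ) :
    ‖polarCurve Ω n t s‖ = t / suppFn Ω (n s) := by
  have := b.suppFn_normal_pos s
  rw [polarCurve, norm_smul, b.norm_normal, mul_one, Real.norm_of_nonneg (by positivity)]

lemma div_le_norm_polarCurve (b : CurvedBoundary Ω γ γ' γ'' n L a r R) (ht : 0 ≤ t) (s : ℝ) :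
    t / R ≤ ‖polarCurve Ω n t s‖ := by
  rw [div_le_iff₀' b.outerRadius_pos]
  simpa only [b.suppFn_polarCurve ht s] using b.suppFn_le_mul_norm (polarCurve Ω n t s)

lemma exists_polarCurve_eq (b : CurvedBoundary Ω γ γ' γ'' n L a r R) {x : E2} (hx : x ≠ 0) :
    ∃ s ∈ Ico 0 L, polarCurve Ω n (suppFn Ω x) s = x := by
  obtain ⟨s, hs, hxs⟩ := b.exists_eq_norm_smul_normal hx
  refine ⟨s, hs, ?_⟩
  conv_lhs => rw [polarCurve, hxs, suppFn_smul_of_nonneg (norm_nonneg x),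
    mul_div_cancel_right₀ _ (b.suppFn_normal_pos s).ne']
  exact hxs.symm

lemma norm_polarCurve_sub_le (b : CurvedBoundary Ω γ γ' γ'' n L a r R) (ht : 0 ≤ t) (s u : ℝ) :
    ‖polarCurve Ω n t s - polarCurve Ω n t u‖ ≤ t * (1 / r + R / r ^ 2) * ‖n s - n u‖ := by
  have hr := b.innerRadius_pos
  have hs := b.innerRadius_le_suppFn_normal s
  have hu := b.innerRadius_le_suppFn_normal u
  have hs0 := b.suppFn_normal_pos s
  have hu0 := b.suppFn_normal_pos u
  have hsplit : polarCurve Ω n t s - polarCurve Ω n t u =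
      (t / suppFn Ω (n s)) • (n s - n u) + (t / suppFn Ω (n s) - t / suppFn Ω (n u)) • n u := by
    rw [polarCurve, polarCurve, smul_sub, sub_smul]
    abel
  have hradius : |t / suppFn Ω (n s) - t / suppFn Ω (n u)| ≤ t * (R * ‖n s - n u‖) / r ^ 2 := by
    have hsub : t / suppFn Ω (n s) - t / suppFn Ω (n u) =
        t * (suppFn Ω (n u) - suppFn Ω (n s)) / (suppFn Ω (n s) * suppFn Ω (n u)) := by
      rw [div_sub_div _ _ hs0.ne' hu0.ne']
      ring
    rw [hsub, abs_div, abs_mul, abs_of_nonneg ht, abs_of_pos (mul_pos hs0 hu0), pow_two]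
    have := b.outerRadius_pos
    gcongr
    rw [norm_sub_rev]
    exact abs_suppFn_sub_le ⟨0, b.zero_mem⟩ b.subset_closedBall _ _
  calc ‖polarCurve Ω n t s - polarCurve Ω n t u‖
      ≤ t / suppFn Ω (n s) * ‖n s - n u‖ + |t / suppFn Ω (n s) - t / suppFn Ω (n u)| := by
        rw [hsplit]
        refine (norm_add_le _ _).trans_eq ?_
        rw [norm_smul, norm_smul, b.norm_normal, mul_one, Real.norm_eq_abs, Real.norm_eq_abs,
          abs_of_nonneg (div_nonneg ht hs0.le)]
    _ ≤ t / r * ‖n s - n u‖ + t * (R * ‖n s - n u‖) / r ^ 2 := by gcongr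
    _ = t * (1 / r + R / r ^ 2) * ‖n s - n u‖ := by ring

end CurvedBoundary

/-! ### The discrepancy in one box -/

/-- The vector `ν` is, up to an error `δ`, orthogonal to a nonzero integer vector with entries
bounded by `N`: up to a rotation by a right angle, it points in nearly the direction of a lattice
vector of small height. -/
def IsNearlyRational (N : ℕ) (δ : ℝ) (ν : E2) : Prop :=
  ∃ p : Fin 2 → ℤ, p ≠ 0 ∧ (∀ i, |p i| ≤ N) ∧ |ν 0 * p 0 + ν 1 * p 1| ≤ δ

lemma isNearlyRational_of_abs_mul_sub_mul_le {N : ℕ} {δ : ℝ} {ν : E2} {i j : Fin 2} (hij : i ≠ j)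
    {p q : ℤ} (hq : q ≠ 0) (hpN : |p| ≤ N) (hqN : |q| ≤ N) (h : |ν i * q - ν j * p| ≤ δ) :
    IsNearlyRational N δ ν := by
  refine ⟨fun k => if k = i then q else -p, fun h0 => hq ?_, fun k => ?_, ?_⟩
  · simpa using congrFun h0 i
  · dsimp only
    split_ifs
    · exact hqN
    · rwa [abs_neg]
  · obtain ⟨rfl, rfl⟩ | ⟨rfl, rfl⟩ : i = 0 ∧ j = 1 ∨ i = 1 ∧ j = 0 := by omega
    · simpa [← sub_eq_add_neg] using h
    · simpa [← sub_eq_neg_add] using h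

lemma abs_num_le_den_of_abs_mul_sub_lt_one {θ : ℝ} (hθ : |θ| ≤ 1) {q : ℚ}
    (h : |θ * q.den - q.num| < 1) : |q.num| ≤ q.den := by
  have hlt : |(q.num : ℝ)| < q.den + 1 := by
    have hden : |θ * q.den| ≤ q.den := by
      rw [abs_mul, Nat.abs_cast]
      exact mul_le_of_le_one_left (Nat.cast_nonneg _) hθ
    rw [abs_sub_comm] at h
    linarith [abs_sub_abs_le_abs_sub (q.num : ℝ) (θ * q.den)]
  exact Int.lt_add_one_iff.1 (by exact_mod_cast hlt)

lemma exists_isCoprime_abs_sub_le_of_not_isNearlyRational {N M : ℕ} {δ : ℝ} {ν : E2} {i j : Fin 2}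
    (hij : i ≠ j) (hM : 0 < M) (hν : ν j ≠ 0) (hle : |ν i| ≤ |ν j|) (hδ : |ν j| / M ≤ δ)
    (h : ¬ IsNearlyRational N δ ν) :
    ∃ (p : ℤ) (q : ℕ), N < q ∧ q ≤ M ∧ IsCoprime p (q : ℤ) ∧
      |ν i / ν j - p / q| ≤ 1 / (q : ℝ) ^ 2 := by
  obtain ⟨q, hq, hqM⟩ := Real.exists_rat_abs_sub_le_and_den_le (ν i / ν j) hM
  have hden : (0 : ℝ) < q.den := by exact_mod_cast q.den_pos
  have hM' : (0 : ℝ) < M := by exact_mod_cast hM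
  rw [Rat.cast_def] at hq
  have hmul : |ν i / ν j * q.den - q.num| ≤ 1 / (M + 1) := by
    calc |ν i / ν j * q.den - q.num| = |ν i / ν j - q.num / q.den| * q.den := by
          rw [← abs_of_pos hden, ← abs_mul, abs_of_pos hden, sub_mul, div_mul_cancel₀ _ hden.ne']
      _ ≤ 1 / ((M + 1) * q.den) * q.den := by gcongr
      _ = 1 / (M + 1) := by field_simp
  refine ⟨q.num, q.den, ?_, hqM, ?_, hq.trans ?_⟩
  · by_contra! hsmall
    have hnum := abs_num_le_den_of_abs_mul_sub_lt_one (q := q)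
      (by rwa [abs_div, div_le_one (abs_pos.2 hν)])
      (hmul.trans_lt ((div_lt_one (by positivity)).2 (by linarith)))
    refine h (isNearlyRational_of_abs_mul_sub_mul_le hij (p := q.num) (q := q.den) ?_ ?_ ?_ ?_)
    · exact_mod_cast q.den_ne_zero
    · exact hnum.trans (by exact_mod_cast hsmall)
    · exact_mod_cast hsmall
    · calc |ν i * (q.den : ℤ) - ν j * q.num| = |ν j| * |ν i / ν j * q.den - q.num| := by
            rw [← abs_mul, mul_sub, ← mul_assoc, mul_div_cancel₀ _ hν, Int.cast_natCast]
        _ ≤ |ν j| * (1 / (M + 1)) := by gcongr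
        _ ≤ |ν j| * (1 / M) := by
            gcongr
            linarith
        _ ≤ δ := by rwa [mul_one_div]
  · rw [Int.isCoprime_iff_gcd_eq_one]
    exact q.reduced
  · rw [pow_two]
    gcongr
    exact le_add_of_le_of_nonneg (by exact_mod_cast hqM) zero_le_one

lemma exists_abs_le_and_norm_le_two_mul (ν : E2) :
    ∃ i j : Fin 2, i ≠ j ∧ |ν i| ≤ |ν j| ∧ ‖ν‖ ≤ 2 * |ν j| := by
  have hν := norm_le_abs_add_abs ν
  rcases le_total |ν 0| |ν 1| with h | h
  · exact ⟨0, 1, by simp, h, by linarith⟩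
  · exact ⟨1, 0, by simp, h, by linarith⟩

lemma abs_sum_columnError_le_of_not_isNearlyRational {N M : ℕ} {δ : ℝ} {ν : E2} {i j : Fin 2}
    (hij : i ≠ j) (hN : 0 < N) (hM : 0 < M) (hν : ν j ≠ 0) (hle : |ν i| ≤ |ν j|)
    (hδ : |ν j| / M ≤ δ) (h : ¬ IsNearlyRational N δ ν) (H : ℕ) (c : ℝ) {θ : ℝ}
    (hθ : |θ| = |ν i / ν j|) :
    |∑ k ∈ Finset.range H, columnError H θ (c - θ * k)| ≤ 6 * (H / N) + 21 * M := by
  obtain ⟨p, q, hNq, hqM, hcop, hpq⟩ :=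
    exists_isCoprime_abs_sub_le_of_not_isNearlyRational hij hM hν hle hδ h
  have hθ1 : |θ| ≤ 1 := by rwa [hθ, abs_div, div_le_one (abs_pos.2 hν)]
  have hq : |∑ k ∈ Finset.range H, columnError H θ (c - θ * k)| ≤ 6 * (H / q) + 21 * q := by
    rcases abs_eq_abs.1 hθ with rfl | rfl
    · exact abs_sum_columnError_le_of_isCoprime H c hθ1 (by omega) hcop hpq
    · refine abs_sum_columnError_le_of_isCoprime H c hθ1 (by omega) hcop.neg_left ?_
      rwa [Int.cast_neg, neg_div, sub_neg_eq_add, neg_add_eq_sub, abs_sub_comm]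
  refine hq.trans ?_
  gcongr

lemma natCast_pow_six_cube_div_le {N : ℕ} {t : ℝ} (ht : 0 < t) (hNt : (N : ℝ) ^ 13 ≤ t) :
    ((N ^ 6 : ℕ) : ℝ) ^ 3 / t ≤ (N : ℝ) ^ 5 := by
  rw [div_le_iff₀ ht, Nat.cast_pow, ← pow_mul]
  calc (N : ℝ) ^ (6 * 3) = (N : ℝ) ^ 5 * (N : ℝ) ^ 13 := by ring
    _ ≤ (N : ℝ) ^ 5 * t := by gcongr

namespace CurvedBoundary

variable {Ω : Set E2} {γ γ' γ'' n : ℝ → E2} {L a r R : ℝ}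

/-- The dilated polar set is squeezed between two half-planes whose distance is, by uniform
convexity, quadratic in the side of the box. -/
lemma exists_abs_discrepancy_le (b : CurvedBoundary Ω γ γ' γ'' n L a r R) :
    ∃ C, 0 < C ∧ ∀ {t s : ℝ} {H : ℕ} {m : Fin 2 → ℤ}, 0 < t → polarCurve Ω n t s ∈ gridBox H m →
      ∀ {i j : Fin 2} {B : ℝ}, i ≠ j → r ≤ 2 * |γ s j| →
      (∀ c θ : ℝ, |θ| = |γ s i / γ s j| →
        |∑ k ∈ Finset.range H, columnError H θ (c - θ * k)| ≤ B) →
      |discrepancy ({x | suppFn Ω x ≤ t} ∩ gridBox H m)| ≤ B + C * (H ^ 3 / t) := by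
  obtain ⟨c, hc, hquad⟩ := b.exists_forall_suppFn_le
  have hr := b.innerRadius_pos
  have hR := b.outerRadius_pos
  refine ⟨8 * c * R / r, by positivity, fun {t s H m} ht hm {i j B} hij hj hB => ?_⟩
  have hnorm := b.div_le_norm_polarCurve ht.le s
  have hne : polarCurve Ω n t s ≠ 0 := norm_pos_iff.1 (lt_of_lt_of_le (by positivity) hnorm)
  have hdir : polarCurve Ω n t s = ‖polarCurve Ω n t s‖ • n s := by
    rw [b.norm_polarCurve ht.le, polarCurve]
  have hj0 : 0 < |γ s j| := by linarith
  set ε := c * (2 * (H : ℝ)) ^ 2 / (t / R)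
  have hupper : {x | suppFn Ω x ≤ t} ∩ gridBox H m ⊆ halfPlane (γ s) t := fun y hy =>
    (inner_le_suppFn b.isBounded y (b.param.mem_closure s)).trans hy.1
  have hlower : halfPlane (γ s) (t - ε) ∩ gridBox H m ⊆ {x | suppFn Ω x ≤ t} := fun y hy => by
    have hquad' : suppFn Ω y ≤ ⟪γ s, y⟫ + ε := by
      refine (hquad s _ hne hdir y).trans ?_
      simp only [ε]
      gcongr
      exact norm_sub_le_of_mem_gridBox hy.2 hm
    exact hquad'.trans (le_sub_iff_add_le.1 hy.1)
  calc |discrepancy ({x | suppFn Ω x ≤ t} ∩ gridBox H m)| ≤ B + H * (ε / |γ s j|) :=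
        abs_discrepancy_inter_gridBox_le hij (abs_pos.1 hj0) (by positivity) hupper hlower hB
    _ ≤ B + H * (ε / (r / 2)) := by
        gcongr
        linarith
    _ = B + 8 * c * R / r * (H ^ 3 / t) := by
        simp only [ε]
        field_simp
        ring

lemma exists_forall_abs_discrepancy_le (b : CurvedBoundary Ω γ γ' γ'' n L a r R) :
    ∃ C, 0 < C ∧ ∀ {t s : ℝ} {N : ℕ} {m : Fin 2 → ℤ}, 0 < N → (N : ℝ) ^ 13 ≤ t →
      polarCurve Ω n t s ∈ gridBox (N ^ 6) m →
      |discrepancy ({x | suppFn Ω x ≤ t} ∩ gridBox (N ^ 6) m)| ≤ C * (N : ℝ) ^ 6 ∧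
      (¬ IsNearlyRational N (R / (N : ℝ) ^ 5) (γ s) →
        |discrepancy ({x | suppFn Ω x ≤ t} ∩ gridBox (N ^ 6) m)| ≤ C * (N : ℝ) ^ 5) := by
  obtain ⟨C, hC, hbox⟩ := b.exists_abs_discrepancy_le
  refine ⟨27 + C, by positivity, fun {t s N m} hN hNt hm => ?_⟩
  have hN1 : (1 : ℝ) ≤ N := by exact_mod_cast hN
  have ht : 0 < t := lt_of_lt_of_le (by positivity) hNt
  obtain ⟨i, j, hij, hle, hj⟩ := exists_abs_le_and_norm_le_two_mul (γ s)
  have hrj : r ≤ 2 * |γ s j| := (b.innerRadius_le_norm s).trans hj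
  have hj0 : γ s j ≠ 0 := abs_pos.1 (by linarith [b.innerRadius_pos])
  have hcurved := natCast_pow_six_cube_div_le ht hNt
  constructor
  · have hpow : (N : ℝ) ^ 5 ≤ (N : ℝ) ^ 6 := pow_le_pow_right₀ hN1 (by norm_num)
    calc |discrepancy ({x | suppFn Ω x ≤ t} ∩ gridBox (N ^ 6) m)|
        ≤ 2 * ((N ^ 6 : ℕ) : ℝ) + C * (((N ^ 6 : ℕ) : ℝ) ^ 3 / t) :=
          hbox ht hm hij hrj fun c θ hθ => abs_sum_columnError_le _ c
            (by rwa [hθ, abs_div, div_le_one (abs_pos.2 hj0)])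
      _ ≤ 27 * (N : ℝ) ^ 6 + C * (N : ℝ) ^ 6 := by
          gcongr
          · norm_num
          · exact (Nat.cast_pow N 6).le
          · exact hcurved.trans hpow
      _ = (27 + C) * (N : ℝ) ^ 6 := by ring
  · intro hirr
    have hδ : |γ s j| / (N ^ 5 : ℕ) ≤ R / (N : ℝ) ^ 5 := by
      rw [Nat.cast_pow]
      gcongr
      exact (abs_apply_le_norm _ _).trans (b.norm_le s)
    calc |discrepancy ({x | suppFn Ω x ≤ t} ∩ gridBox (N ^ 6) m)|
        ≤ 6 * ((N ^ 6 : ℕ) / N) + 21 * (N ^ 5 : ℕ) + C * (((N ^ 6 : ℕ) : ℝ) ^ 3 / t) :=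
          hbox ht hm hij hrj fun c θ hθ => abs_sum_columnError_le_of_not_isNearlyRational hij hN
            (by positivity) hj0 hle hδ hirr _ c hθ
      _ ≤ 6 * (N : ℝ) ^ 5 + 21 * (N : ℝ) ^ 5 + C * (N : ℝ) ^ 5 := by
          gcongr
          · rw [Nat.cast_pow, pow_succ, mul_div_cancel_right₀ _ (by positivity)]
          · exact (Nat.cast_pow N 5).le
      _ = (27 + C) * (N : ℝ) ^ 5 := by ring

end CurvedBoundary

/-! ### Counting boxes by total curvature -/

lemma le_add_of_mem_gridBox_of_norm_sub_le {H : ℕ} (hH : 0 < H) {m m' : Fin 2 → ℤ} {x x' : E2}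
    (hx : x ∈ gridBox H m) (hx' : x' ∈ gridBox H m') {c : ℝ} (h : ‖x - x'‖ ≤ c * H) (i : Fin 2) :
    m i ≤ m' i + ⌈c⌉₊ := by
  have hH' : (0 : ℝ) < H := by exact_mod_cast hH
  have hi : x i - x' i ≤ c * H := (le_abs_self _).trans ((abs_apply_le_norm (x - x') i).trans h)
  have hlow := (hx i).1
  have hupp := (hx' i).2
  push_cast at hlow hupp
  have hlt : (m i : ℝ) < m' i + c + 1 := by
    refine lt_of_mul_lt_mul_left ?_ hH'.le
    linarith
  have hceil := Nat.le_ceil c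
  refine Int.lt_add_one_iff.1 ?_
  have : (m i : ℝ) < m' i + ⌈c⌉₊ + 1 := by linarith
  exact_mod_cast this

lemma card_le_of_mem_gridBox_of_norm_sub_le {H : ℕ} (hH : 0 < H) {S : Finset (Fin 2 → ℤ)}
    {x : (Fin 2 → ℤ) → E2} (hx : ∀ m ∈ S, x m ∈ gridBox H m) {c : ℝ}
    (h : ∀ m ∈ S, ∀ m' ∈ S, ‖x m - x m'‖ ≤ c * H) : S.card ≤ (⌈c⌉₊ + 1) ^ 2 := by
  classical
  have himage (i : Fin 2) : (S.image fun m => m i).card ≤ ⌈c⌉₊ + 1 := by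
    refine card_le_of_forall_le_add (f := id) (Set.injOn_id _) fun a ha a' ha' => ?_
    obtain ⟨m, hm, rfl⟩ := Finset.mem_image.1 ha
    obtain ⟨m', hm', rfl⟩ := Finset.mem_image.1 ha'
    exact le_add_of_mem_gridBox_of_norm_sub_le hH (hx m' hm') (hx m hm) (h m' hm' m hm) i
  calc S.card ≤ (Fintype.piFinset fun i => S.image fun m => m i).card :=
        Finset.card_le_card fun m hm =>
          Fintype.mem_piFinset.2 fun i => Finset.mem_image_of_mem (fun m => m i) hm
    _ ≤ (⌈c⌉₊ + 1) ^ 2 := by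
        rw [Fintype.card_piFinset]
        simpa using Finset.prod_le_pow_card Finset.univ _ _ fun i _ => himage i

lemma card_Icc_floor_le {u v : ℝ} (h : u ≤ v) :
    ((Finset.Icc ⌊u⌋ ⌊v⌋).card : ℝ) ≤ v - u + 2 := by
  rw [Int.card_Icc, ← Int.cast_natCast, Int.toNat_of_nonneg
    (sub_nonneg.2 ((Int.floor_le_floor h).trans (le_add_of_nonneg_right zero_le_one)))]
  push_cast
  linarith [Int.floor_le v, Int.lt_floor_add_one u]

/-- The fibres of `⌊f ∘ s⌋` are controlled by `hA`, and `⌊f⌋` takes few values on each interval. -/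
lemma card_le_mul_sum_sub_add_two {α ι : Type*} {S : Finset α} {s : α → ℝ} {T : Finset ι}
    {u v : ι → ℝ} {f : ℝ → ℝ} (hf : Monotone f) (huv : ∀ j ∈ T, u j ≤ v j)
    (hs : ∀ m ∈ S, ∃ j ∈ T, s m ∈ Icc (u j) (v j)) {A : ℕ}
    (hA : ∀ k : ℤ, (S.filter fun m => ⌊f (s m)⌋ = k).card ≤ A) :
    (S.card : ℝ) ≤ A * ∑ j ∈ T, (f (v j) - f (u j) + 2) := by
  classical
  have himage : S.image (fun m => ⌊f (s m)⌋) ⊆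
      T.biUnion fun j => Finset.Icc ⌊f (u j)⌋ ⌊f (v j)⌋ := by
    refine Finset.image_subset_iff.2 fun m hm => ?_
    obtain ⟨j, hj, hu, hv⟩ := hs m hm
    exact Finset.mem_biUnion.2 ⟨j, hj, Finset.mem_Icc.2
      ⟨Int.floor_le_floor (hf hu), Int.floor_le_floor (hf hv)⟩⟩
  calc (S.card : ℝ) ≤ A * (S.image fun m => ⌊f (s m)⌋).card := by
        exact_mod_cast Finset.card_le_mul_card_image S A fun k _ => hA k
    _ ≤ A * ∑ j ∈ T, ((Finset.Icc ⌊f (u j)⌋ ⌊f (v j)⌋).card : ℝ) := by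
        gcongr
        exact_mod_cast (Finset.card_le_card himage).trans Finset.card_biUnion_le
    _ ≤ A * ∑ j ∈ T, (f (v j) - f (u j) + 2) := by
        gcongr with j hj
        exact card_Icc_floor_le (hf (huv j hj))

/-- The total curvature of the arc from `γ 0` to `γ s`, where `κ = γ''` is the curvature vector. -/
def totalCurvature (κ : ℝ → E2) (s : ℝ) : ℝ := ∫ v in (0 : ℝ)..s, ‖κ v‖

namespace BoundaryParam

variable {Ω : Set E2} {γ γ' γ'' : ℝ → E2} {L : ℝ}

lemma totalCurvature_sub (h : BoundaryParam Ω γ γ' γ'' L) (s t : ℝ) :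
    totalCurvature γ'' t - totalCurvature γ'' s = ∫ v in s..t, ‖γ'' v‖ :=
  intervalIntegral.integral_interval_sub_left (h.intervalIntegrable 0 t).norm
    (h.intervalIntegrable 0 s).norm

lemma monotone_totalCurvature (h : BoundaryParam Ω γ γ' γ'' L) :
    Monotone (totalCurvature γ'') := fun s t hst =>
  sub_nonneg.1 (h.totalCurvature_sub s t ▸
    intervalIntegral.integral_nonneg hst fun _ _ => norm_nonneg _)

lemma norm_tangent_sub_le (h : BoundaryParam Ω γ γ' γ'' L) (s t : ℝ) :
    ‖γ' t - γ' s‖ ≤ |totalCurvature γ'' t - totalCurvature γ'' s| := by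
  rw [h.tangent_sub, h.totalCurvature_sub]
  exact intervalIntegral.norm_integral_le_abs_integral_norm

end BoundaryParam

namespace CurvedBoundary

variable {Ω : Set E2} {γ γ' γ'' n : ℝ → E2} {L a r R : ℝ}

lemma exists_card_le_mul_sum_totalCurvature (b : CurvedBoundary Ω γ γ' γ'' n L a r R) :
    ∃ C, 0 < C ∧ ∀ {ι : Type} {H : ℕ} {t : ℝ} {S : Finset (Fin 2 → ℤ)} {s : (Fin 2 → ℤ) → ℝ}
      {T : Finset ι} {u v : ι → ℝ}, 0 < H → 0 < t →
      (∀ m ∈ S, polarCurve Ω n t (s m) ∈ gridBox H m) → (∀ j ∈ T, u j ≤ v j) →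
      (∀ m ∈ S, ∃ j ∈ T, s m ∈ Icc (u j) (v j)) →
      (S.card : ℝ) ≤
        C * ∑ j ∈ T, (t / H * (totalCurvature γ'' (v j) - totalCurvature γ'' (u j)) + 2) := by
  have hr := b.innerRadius_pos
  have hR := b.outerRadius_pos
  set c := 1 / r + R / r ^ 2
  have : 0 ≤ c := by positivity
  refine ⟨((⌈c⌉₊ + 1) ^ 2 : ℕ), by positivity, ?_⟩
  intro ι H t S s T u v hH ht hbox huv hs
  have : (0 : ℝ) < H := by exact_mod_cast hH
  simp only [mul_sub]
  refine card_le_mul_sum_sub_add_two (f := fun w => t / H * totalCurvature γ'' w)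
    (b.param.monotone_totalCurvature.const_mul (by positivity)) huv hs fun k => ?_
  refine card_le_of_mem_gridBox_of_norm_sub_le hH
    (fun m hm => hbox m (Finset.mem_filter.1 hm).1) fun m hm m' hm' => ?_
  have hfloor := Int.abs_sub_lt_one_of_floor_eq_floor
    ((Finset.mem_filter.1 hm).2.trans (Finset.mem_filter.1 hm').2.symm)
  rw [← mul_sub, abs_mul, abs_of_pos (by positivity)] at hfloor
  calc ‖polarCurve Ω n t (s m) - polarCurve Ω n t (s m')‖
      ≤ t * c * ‖n (s m) - n (s m')‖ := b.norm_polarCurve_sub_le ht.le _ _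
    _ ≤ t * c * |totalCurvature γ'' (s m) - totalCurvature γ'' (s m')| := by
        gcongr
        rw [b.norm_normal_sub]
        exact b.param.norm_tangent_sub_le _ _
    _ = c * H * (t / H * |totalCurvature γ'' (s m) - totalCurvature γ'' (s m')|) := by
        field_simp
    _ ≤ c * H * 1 := by gcongr
    _ = c * H := mul_one _

end CurvedBoundary

/-! ### Nearly rational normals -/

/-- The `j`-th point of the division of `[0, L]` into `M` intervals of equal length. -/
def divisionPoint (L : ℝ) (M j : ℕ) : ℝ := j * (L / M)

lemma divisionPoint_zero (L : ℝ) (M : ℕ) : divisionPoint L M 0 = 0 := by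
  simp [divisionPoint]

lemma divisionPoint_self (L : ℝ) {M : ℕ} (hM : 0 < M) : divisionPoint L M M = L :=
  mul_div_cancel₀ L (Nat.cast_ne_zero.2 hM.ne')

lemma divisionPoint_sub (L : ℝ) (M j k : ℕ) :
    divisionPoint L M k - divisionPoint L M j = (k - j) * (L / M) :=
  (sub_mul _ _ _).symm

lemma monotone_divisionPoint {L : ℝ} (hL : 0 ≤ L) (M : ℕ) : Monotone (divisionPoint L M) :=
  fun j k hjk => by unfold divisionPoint; gcongr

lemma Icc_divisionPoint_subset {L : ℝ} (hL : 0 ≤ L) {M j : ℕ} (hj : j < M) :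
    Icc (divisionPoint L M j) (divisionPoint L M (j + 1)) ⊆ Icc 0 L :=
  Icc_subset_Icc ((divisionPoint_zero L M).ge.trans (monotone_divisionPoint hL M j.zero_le))
    ((monotone_divisionPoint hL M hj).trans (divisionPoint_self L (j.zero_le.trans_lt hj)).le)

lemma exists_mem_Icc_divisionPoint {L s : ℝ} {M : ℕ} (hM : 0 < M) (hs : s ∈ Ico 0 L) :
    ∃ j < M, s ∈ Icc (divisionPoint L M j) (divisionPoint L M (j + 1)) := by
  have hM' : (0 : ℝ) < M := by exact_mod_cast hM
  have hstep : 0 < L / M := div_pos (hs.1.trans_lt hs.2) hM'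
  refine ⟨⌊s / (L / M)⌋₊, ?_, ?_, ?_⟩
  · rw [Nat.floor_lt (div_nonneg hs.1 hstep.le), div_lt_iff₀ hstep, mul_div_cancel₀ L hM'.ne']
    exact hs.2
  · exact (le_div_iff₀ hstep).1 (Nat.floor_le (div_nonneg hs.1 hstep.le))
  · refine (div_le_iff₀ hstep).1 ?_
    push_cast
    exact (Nat.lt_floor_add_one _).le

lemma card_le_of_mem_Icc_divisionPoint {L : ℝ} (hL : 0 < L) {M : ℕ} (hM : 0 < M) {T : Finset ℕ}
    {s : ℕ → ℝ} (hs : ∀ j ∈ T, s j ∈ Icc (divisionPoint L M j) (divisionPoint L M (j + 1)))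
    {c : ℝ} (h : ∀ j ∈ T, ∀ k ∈ T, |s k - s j| ≤ c * (L / M)) : T.card ≤ ⌈c + 1⌉₊ + 1 := by
  refine card_le_of_forall_le_add (f := Nat.cast) Nat.cast_injective.injOn fun j hj k hk => ?_
  have : (0 : ℝ) < M := by exact_mod_cast hM
  have hle : (k - (j + 1 : ℕ) : ℝ) * (L / M) ≤ c * (L / M) := by
    rw [← divisionPoint_sub]
    linarith [(hs j hj).2, (hs k hk).1, le_abs_self (s k - s j), h j hj k hk]
  have hkj := le_of_mul_le_mul_right hle (by positivity)
  push_cast at hkj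
  have : (k : ℝ) ≤ j + ⌈c + 1⌉₊ := by linarith [Nat.le_ceil (c + 1)]
  exact_mod_cast this

/-- By Cramer's rule, `|p i|` times the determinant is at most `2 * R * δ`. -/
lemma abs_det_le_of_abs_dot_le {x y : E2} {p : Fin 2 → ℤ} (hp : p ≠ 0) {R δ : ℝ} (hx : ‖x‖ ≤ R)
    (hy : ‖y‖ ≤ R) (hxp : |x 0 * p 0 + x 1 * p 1| ≤ δ) (hyp : |y 0 * p 0 + y 1 * p 1| ≤ δ) :
    |x 0 * y 1 - x 1 * y 0| ≤ 2 * R * δ := by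
  have hR : 0 ≤ R := (norm_nonneg x).trans hx
  have hbound (i : Fin 2) : |(x 0 * p 0 + x 1 * p 1) * y i - x i * (y 0 * p 0 + y 1 * p 1)| ≤
      2 * R * δ := by
    calc |(x 0 * p 0 + x 1 * p 1) * y i - x i * (y 0 * p 0 + y 1 * p 1)|
        ≤ |x 0 * p 0 + x 1 * p 1| * |y i| + |x i| * |y 0 * p 0 + y 1 * p 1| := by
          rw [← abs_mul, ← abs_mul]
          exact abs_sub _ _
      _ ≤ δ * R + R * δ := by
          gcongr
          · exact (abs_nonneg _).trans hxp
          · exact (abs_apply_le_norm y i).trans hy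
          · exact (abs_apply_le_norm x i).trans hx
      _ = 2 * R * δ := by ring
  have hle {z : ℤ} (hz : z ≠ 0) : |x 0 * y 1 - x 1 * y 0| ≤ |(x 0 * y 1 - x 1 * y 0) * z| := by
    have hone : 1 ≤ |(z : ℝ)| := by exact_mod_cast Int.one_le_abs hz
    exact (le_mul_of_one_le_right (abs_nonneg _) hone).trans (abs_mul _ _).ge
  obtain h | h := Fin.exists_fin_two.1 (Function.ne_iff.1 hp)
  · refine (hle h).trans (le_of_eq_of_le ?_ (hbound 1))
    congr 1
    ring
  · refine (hle h).trans (le_of_eq_of_le ?_ (hbound 0))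
    rw [← abs_neg]
    congr 1
    ring

lemma card_image_prod_floor_le {α : Type*} {T : Finset α} {p : α → Fin 2 → ℤ} {s : α → ℝ} {N : ℕ}
    {L ρ : ℝ} (hρ : 0 < ρ) (hp : ∀ j ∈ T, ∀ i, |p j i| ≤ N) (hs : ∀ j ∈ T, s j ∈ Icc 0 L) :
    (T.image fun j => (p j, ⌊s j / ρ⌋)).card ≤ (2 * N + 1) ^ 2 * (⌊L / ρ⌋₊ + 1) := by
  have himage : (T.image fun j => (p j, ⌊s j / ρ⌋)) ⊆
      (Fintype.piFinset fun _ => Finset.Icc (-(N : ℤ)) N) ×ˢ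
        Finset.Ico 0 ((⌊L / ρ⌋₊ + 1 : ℕ) : ℤ) := by
    refine Finset.image_subset_iff.2 fun j hj => Finset.mem_product.2
      ⟨Fintype.mem_piFinset.2 fun i => Finset.mem_Icc.2 (abs_le.1 (hp j hj i)),
        Finset.mem_Ico.2 ⟨Int.floor_nonneg.2 (div_nonneg (hs j hj).1 hρ.le), ?_⟩⟩
    refine Int.floor_lt.2 (lt_of_le_of_lt (b := L / ρ) ?_ ?_)
    · gcongr
      exact (hs j hj).2
    · push_cast
      exact Nat.lt_floor_add_one _
  refine (Finset.card_le_card himage).trans (le_of_eq ?_)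
  have htoNat : ((N : ℤ) + 1 + N).toNat = 2 * N + 1 := by omega
  rw [Finset.card_product, Fintype.card_piFinset]
  simp [htoNat]

namespace CurvedBoundary

variable {Ω : Set E2} {γ γ' γ'' n : ℝ → E2} {L a r R : ℝ}

lemma abs_sub_le_of_abs_dot_le (b : CurvedBoundary Ω γ γ' γ'' n L a r R) {s u δ : ℝ}
    {p : Fin 2 → ℤ} (hp : p ≠ 0) (hsu : |u - s| ≤ r / 2)
    (hs : |γ s 0 * p 0 + γ s 1 * p 1| ≤ δ) (hu : |γ u 0 * p 0 + γ u 1 * p 1| ≤ δ) :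
    |u - s| ≤ 4 * R * δ / r := by
  wlog h : s ≤ u generalizing s u
  · rw [abs_sub_comm] at hsu ⊢
    exact this hsu hu hs (le_of_not_ge h)
  have hr := b.innerRadius_pos
  rw [abs_of_nonneg (sub_nonneg.2 h)] at hsu ⊢
  have hdet := (b.mul_sub_le_abs_det h hsu).trans
    (abs_det_le_of_abs_dot_le hp (b.norm_le s) (b.norm_le u) hs hu)
  rw [le_div_iff₀ hr]
  linarith

/-- Cells whose nearly rational normals share the integer vector `p` and lie on a common arc of
length `r / 2` are neighbours, and there are `O(N ^ 2)` choices of `p` and of the arc. -/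
lemma exists_card_nearlyRational_le (b : CurvedBoundary Ω γ γ' γ'' n L a r R) :
    ∃ C, 0 < C ∧ ∀ {N M : ℕ} {T : Finset ℕ}, 0 < N → 0 < M → T ⊆ Finset.range M →
      (∀ j ∈ T, ∃ s ∈ Icc (divisionPoint L M j) (divisionPoint L M (j + 1)),
        IsNearlyRational N (R / M) (γ s)) → (T.card : ℝ) ≤ C * (N : ℝ) ^ 2 := by
  have hr := b.innerRadius_pos
  have hR := b.outerRadius_pos
  have hL := b.param.length_pos
  set D := ⌈4 * R ^ 2 / (r * L) + 1⌉₊ + 1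
  set B := ⌊L / (r / 2)⌋₊ + 1
  refine ⟨9 * D * B, by positivity, ?_⟩
  intro N M T hN hM hTM hT
  have : (0 : ℝ) < M := by exact_mod_cast hM
  unfold IsNearlyRational at hT
  choose! s hs p hp0 hpN hdot using hT
  have hmem : ∀ j ∈ T, s j ∈ Icc 0 L := fun j hj =>
    Icc_divisionPoint_subset hL.le (Finset.mem_range.1 (hTM hj)) (hs j hj)
  set f := fun j => (p j, ⌊s j / (r / 2)⌋)
  have hfibre : ∀ c ∈ T.image f, (T.filter fun j => f j = c).card ≤ D := by
    intro c _
    refine card_le_of_mem_Icc_divisionPoint hL hM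
      (fun j hj => hs j (Finset.mem_filter.1 hj).1) fun j hj k hk => ?_
    obtain ⟨hjT, hj⟩ := Finset.mem_filter.1 hj
    obtain ⟨hkT, hk⟩ := Finset.mem_filter.1 hk
    obtain ⟨hp, hfloor⟩ := Prod.mk.inj (hk.trans hj.symm)
    have harc := (Int.abs_sub_lt_one_of_floor_eq_floor hfloor).le
    rw [← sub_div, abs_div, abs_of_pos (half_pos hr), div_le_one (half_pos hr)] at harc
    refine (b.abs_sub_le_of_abs_dot_le (hp0 j hjT) harc (hdot j hjT)
      (hp ▸ hdot k hkT)).trans (le_of_eq ?_)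
    field_simp
  calc (T.card : ℝ) ≤ D * ((2 * N + 1) ^ 2 * B) := by
        exact_mod_cast (Finset.card_le_mul_card_image T D hfibre).trans
          (Nat.mul_le_mul_left D (card_image_prod_floor_le (half_pos hr) hpN hmem))
    _ ≤ D * ((3 * N) ^ 2 * B) := by
        have : (1 : ℝ) ≤ N := by exact_mod_cast hN
        gcongr
        linarith
    _ = 9 * D * B * (N : ℝ) ^ 2 := by ring

lemma exists_finset_forall_nearlyRational (b : CurvedBoundary Ω γ γ' γ'' n L a r R) :
    ∃ C, 0 < C ∧ ∀ {N M : ℕ}, 0 < N → 0 < M → ∃ T ⊆ Finset.range M, (T.card : ℝ) ≤ C * (N : ℝ) ^ 2 ∧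
      ∀ s ∈ Ico 0 L, IsNearlyRational N (R / M) (γ s) →
        ∃ j ∈ T, s ∈ Icc (divisionPoint L M j) (divisionPoint L M (j + 1)) := by
  classical
  obtain ⟨C, hC, hcard⟩ := b.exists_card_nearlyRational_le
  refine ⟨C, hC, fun {N M} hN hM => ?_⟩
  refine ⟨(Finset.range M).filter fun j : ℕ => ∃ s ∈ Icc (divisionPoint L M j)
    (divisionPoint L M (j + 1)), IsNearlyRational N (R / M) (γ s), Finset.filter_subset _ _,
    hcard hN hM (Finset.filter_subset _ _) fun j hj => (Finset.mem_filter.1 hj).2,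
    fun s hs hrat => ?_⟩
  obtain ⟨j, hj, hmem⟩ := exists_mem_Icc_divisionPoint hM hs
  exact ⟨j, Finset.mem_filter.2 ⟨Finset.mem_range.2 hj, s, hmem, hrat⟩, hmem⟩

end CurvedBoundary

/-! ### Summation over the boxes -/

/-- The weight `k * (log (2 + k)) ^ g` whose integrability defines the class `L log ^ g L`. -/
def logWeight (g k : ℝ) : ℝ := k * Real.log (2 + k) ^ g

lemma logWeight_nonneg (g : ℝ) {k : ℝ} (hk : 0 ≤ k) : 0 ≤ logWeight g k :=
  mul_nonneg hk (Real.rpow_nonneg (Real.log_nonneg (by linarith)) g)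

lemma le_add_log_rpow_neg_mul_logWeight {g k c : ℝ} (hg : 0 ≤ g) (hk : 0 ≤ k) (hc : 0 ≤ c) :
    k ≤ c + Real.log (2 + c) ^ (-g) * logWeight g k := by
  have hlog : 0 < Real.log (2 + c) := Real.log_pos (by linarith)
  rcases le_total k c with h | h
  · exact h.trans (le_add_of_nonneg_right
      (mul_nonneg (Real.rpow_nonneg hlog.le _) (logWeight_nonneg g hk)))
  · refine le_add_of_nonneg_of_le hc ?_
    rw [logWeight, Real.rpow_neg hlog.le, ← div_eq_inv_mul, le_div_iff₀ (by positivity)]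
    gcongr

lemma exists_finset_forall_mem_gridBox {H : ℕ} (hH : 0 < H) {K : Set E2}
    (hK : Bornology.IsBounded K) :
    ∃ F : Finset (Fin 2 → ℤ), ∀ x ∈ K, ∃ m ∈ F, x ∈ gridBox H m := by
  obtain ⟨B, hB⟩ := hK.exists_norm_le
  refine ⟨Fintype.piFinset fun _ => Finset.Icc ⌊(-B + 1 / 2) / H⌋ ⌊(B + 1 / 2) / H⌋, fun x hx =>
    ⟨fun i => ⌊(x i + 1 / 2) / H⌋, Fintype.mem_piFinset.2 fun i => ?_,
      (mem_gridBox_iff hH).2 fun _ => rfl⟩⟩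
  have hxi := abs_le.1 ((abs_apply_le_norm x i).trans (hB x hx))
  refine Finset.mem_Icc.2 ⟨Int.floor_le_floor ?_, Int.floor_le_floor ?_⟩
  · gcongr
    exact hxi.1
  · gcongr
    exact hxi.2

namespace BoundaryParam

variable {Ω : Set E2} {γ γ' γ'' : ℝ → E2} {L g : ℝ}

lemma totalCurvature_sub_le (h : BoundaryParam Ω γ γ' γ'' L) {c s t : ℝ} (hg : 0 ≤ g) (hc : 0 ≤ c)
    (hst : s ≤ t) (hint : IntervalIntegrable (fun v => logWeight g ‖γ'' v‖) volume s t) :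
    totalCurvature γ'' t - totalCurvature γ'' s ≤
      c * (t - s) + Real.log (2 + c) ^ (-g) * ∫ v in s..t, logWeight g ‖γ'' v‖ := by
  have hint' := hint.const_mul (Real.log (2 + c) ^ (-g))
  calc totalCurvature γ'' t - totalCurvature γ'' s = ∫ v in s..t, ‖γ'' v‖ :=
        h.totalCurvature_sub s t
    _ ≤ ∫ v in s..t, (c + Real.log (2 + c) ^ (-g) * logWeight g ‖γ'' v‖) :=
        intervalIntegral.integral_mono_on hst (h.intervalIntegrable s t).norm
          (intervalIntegrable_const.add hint') fun v _ =>
            le_add_log_rpow_neg_mul_logWeight hg (norm_nonneg _) hc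
    _ = c * (t - s) + Real.log (2 + c) ^ (-g) * ∫ v in s..t, logWeight g ‖γ'' v‖ := by
        rw [intervalIntegral.integral_add intervalIntegrable_const hint',
          intervalIntegral.integral_const, intervalIntegral.integral_const_mul, smul_eq_mul,
          mul_comm c]

lemma sum_totalCurvature_sub_le (h : BoundaryParam Ω γ γ' γ'' L) {c : ℝ} (hg : 0 ≤ g) (hc : 0 ≤ c)
    (hint : IntegrableOn (fun v => logWeight g ‖γ'' v‖) (Icc 0 L)) {M : ℕ} (hM : 0 < M)
    {T : Finset ℕ} (hT : T ⊆ Finset.range M) :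
    ∑ j ∈ T, (totalCurvature γ'' (divisionPoint L M (j + 1)) -
        totalCurvature γ'' (divisionPoint L M j)) ≤
      T.card * (c * (L / M)) + Real.log (2 + c) ^ (-g) * ∫ v in 0..L, logWeight g ‖γ'' v‖ := by
  have hle (j : ℕ) := monotone_divisionPoint h.length_pos.le M j.le_succ
  have hcell : ∀ j < M, IntervalIntegrable (fun v => logWeight g ‖γ'' v‖) volume
      (divisionPoint L M j) (divisionPoint L M (j + 1)) := fun j hj =>
    (intervalIntegrable_iff_integrableOn_Icc_of_le (hle j)).2
      (hint.mono_set (Icc_divisionPoint_subset h.length_pos.le hj))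
  have hlog : 0 ≤ Real.log (2 + c) ^ (-g) :=
    Real.rpow_nonneg (Real.log_nonneg (by linarith)) _
  have hsum : ∑ j ∈ T, ∫ v in (divisionPoint L M j)..(divisionPoint L M (j + 1)),
      logWeight g ‖γ'' v‖ ≤ ∫ v in 0..L, logWeight g ‖γ'' v‖ := by
    refine (Finset.sum_le_sum_of_subset_of_nonneg hT fun j _ _ =>
      intervalIntegral.integral_nonneg (hle j) fun v _ =>
        logWeight_nonneg g (norm_nonneg _)).trans_eq ?_
    rw [intervalIntegral.sum_integral_adjacent_intervals hcell, divisionPoint_zero,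
      divisionPoint_self L hM]
  calc ∑ j ∈ T, (totalCurvature γ'' (divisionPoint L M (j + 1)) -
        totalCurvature γ'' (divisionPoint L M j))
      ≤ ∑ j ∈ T, (c * (L / M) + Real.log (2 + c) ^ (-g) *
          ∫ v in (divisionPoint L M j)..(divisionPoint L M (j + 1)), logWeight g ‖γ'' v‖) := by
        refine Finset.sum_le_sum fun j hj => ?_
        have hj' := h.totalCurvature_sub_le hg hc (hle j) (hcell j (Finset.mem_range.1 (hT hj)))
        rwa [divisionPoint_sub, Nat.cast_succ, add_sub_cancel_left, one_mul] at hj'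
    _ = T.card * (c * (L / M)) + Real.log (2 + c) ^ (-g) *
          ∑ j ∈ T, ∫ v in (divisionPoint L M j)..(divisionPoint L M (j + 1)),
            logWeight g ‖γ'' v‖ := by
        rw [Finset.sum_add_distrib, Finset.sum_const, nsmul_eq_mul, Finset.mul_sum]
    _ ≤ T.card * (c * (L / M)) +
          Real.log (2 + c) ^ (-g) * ∫ v in 0..L, logWeight g ‖γ'' v‖ := by
        gcongr

end BoundaryParam

lemma pow_le_div_of_pow_le {N k m : ℕ} {t : ℝ} (hN : 0 < N) (h : (N : ℝ) ^ m ≤ t) (hk : k < m) :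
    (N : ℝ) ^ k ≤ t / N := by
  rw [le_div_iff₀ (by positivity), ← pow_succ]
  exact (pow_le_pow_right₀ (by exact_mod_cast hN) hk).trans h

namespace CurvedBoundary

variable {Ω : Set E2} {γ γ' γ'' n : ℝ → E2} {L a r R t : ℝ}

lemma isBounded_suppFn_le (b : CurvedBoundary Ω γ γ' γ'' n L a r R) (t : ℝ) :
    Bornology.IsBounded {x | suppFn Ω x ≤ t} := by
  refine (Metric.isBounded_closedBall (x := (0 : E2)) (r := t / r)).subset fun x hx => ?_
  rw [mem_closedBall_zero_iff, le_div_iff₀' b.innerRadius_pos]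
  exact (b.innerRadius_mul_norm_le_suppFn x).trans hx

lemma latticeRest_polarSet (b : CurvedBoundary Ω γ γ' γ'' n L a r R) (ht : 0 < t) :
    latticeRest (polarSet Ω) t = discrepancy {x | suppFn Ω x ≤ t} := by
  have hmeas : MeasurableSet {x | suppFn Ω x ≤ t} :=
    measurableSet_le (continuous_suppFn ⟨0, b.zero_mem⟩ b.isBounded).measurable measurable_const
  rw [latticeRest, discrepancy, latticeMeasure_real_eq_latticeCount hmeas, ← smul_polarSet ht,
    measureReal_def, Measure.addHaar_smul, finrank_euclideanSpace_fin, ENNReal.toReal_mul,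
    ENNReal.toReal_ofReal (abs_nonneg _), abs_of_nonneg (sq_nonneg t)]

lemma exists_latticeRest_eq_sum (b : CurvedBoundary Ω γ γ' γ'' n L a r R) (ht : 0 < t) {H : ℕ}
    (hH : 0 < H) :
    ∃ (S : Finset (Fin 2 → ℤ)) (s : (Fin 2 → ℤ) → ℝ),
      (∀ m ∈ S, s m ∈ Ico 0 L ∧ polarCurve Ω n t (s m) ∈ gridBox H m) ∧
      latticeRest (polarSet Ω) t = ∑ m ∈ S, discrepancy ({x | suppFn Ω x ≤ t} ∩ gridBox H m) := by
  classical
  have hcont : Continuous (suppFn Ω) := continuous_suppFn ⟨0, b.zero_mem⟩ b.isBounded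
  obtain ⟨F, hF⟩ := exists_finset_forall_mem_gridBox hH (b.isBounded_suppFn_le t)
  have hex : ∀ m, discrepancy ({x | suppFn Ω x ≤ t} ∩ gridBox H m) ≠ 0 →
      ∃ s ∈ Ico 0 L, polarCurve Ω n t s ∈ gridBox H m := by
    intro m hm
    obtain ⟨x, hxm, rfl⟩ := exists_eq_of_discrepancy_inter_gridBox_ne_zero hcont hm
    have hx : x ≠ 0 := by
      rintro rfl
      exact ht.not_ge ((b.suppFn_le_mul_norm 0).trans_eq (by simp))
    obtain ⟨s, hs, hxs⟩ := b.exists_polarCurve_eq hx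
    exact ⟨s, hs, by rwa [hxs]⟩
  choose! s hs hmem using hex
  refine ⟨F.filter fun m => discrepancy ({x | suppFn Ω x ≤ t} ∩ gridBox H m) ≠ 0, s,
    fun m hm => ⟨hs m (Finset.mem_filter.1 hm).2, hmem m (Finset.mem_filter.1 hm).2⟩, ?_⟩
  rw [b.latticeRest_polarSet ht, Finset.sum_filter_ne_zero]
  exact discrepancy_eq_sum_inter_gridBox hH
    (measurableSet_le hcont.measurable measurable_const) (b.isBounded_suppFn_le t) hF

open Classical in
lemma exists_abs_latticeRest_le_card (b : CurvedBoundary Ω γ γ' γ'' n L a r R) :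
    ∃ C, 0 < C ∧ ∀ {t : ℝ} {N : ℕ}, 0 < N → (N : ℝ) ^ 13 ≤ t →
      ∃ (S : Finset (Fin 2 → ℤ)) (s : (Fin 2 → ℤ) → ℝ),
        (∀ m ∈ S, s m ∈ Ico 0 L ∧ polarCurve Ω n t (s m) ∈ gridBox (N ^ 6) m) ∧
        |latticeRest (polarSet Ω) t| ≤ C * ((N : ℝ) ^ 5 * S.card + (N : ℝ) ^ 6 *
          (S.filter fun m => IsNearlyRational N (R / (N : ℝ) ^ 5) (γ (s m))).card) := by
  obtain ⟨C, hC, hbox⟩ := b.exists_forall_abs_discrepancy_le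
  refine ⟨C, hC, fun {t N} hN hNt => ?_⟩
  have ht : 0 < t := lt_of_lt_of_le (by positivity) hNt
  obtain ⟨S, s, hs, hsum⟩ := b.exists_latticeRest_eq_sum ht (pow_pos hN 6)
  refine ⟨S, s, hs, ?_⟩
  calc |latticeRest (polarSet Ω) t|
      ≤ ∑ m ∈ S, |discrepancy ({x | suppFn Ω x ≤ t} ∩ gridBox (N ^ 6) m)| :=
        hsum ▸ Finset.abs_sum_le_sum_abs _ _
    _ ≤ ∑ m ∈ S, (C * (N : ℝ) ^ 5 +
          if IsNearlyRational N (R / (N : ℝ) ^ 5) (γ (s m)) then C * (N : ℝ) ^ 6 else 0) := by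
        refine Finset.sum_le_sum fun m hm => ?_
        obtain ⟨hgeneral, hirrational⟩ := hbox hN hNt (hs m hm).2
        split_ifs with h
        · exact le_add_of_nonneg_of_le (by positivity) hgeneral
        · simpa using hirrational h
    _ = _ := by
        rw [Finset.sum_add_distrib, ← Finset.sum_filter, Finset.sum_const, Finset.sum_const,
          nsmul_eq_mul, nsmul_eq_mul]
        ring

lemma exists_card_le (b : CurvedBoundary Ω γ γ' γ'' n L a r R) :
    ∃ C, 0 < C ∧ ∀ {t : ℝ} {H : ℕ} {S : Finset (Fin 2 → ℤ)} {s : (Fin 2 → ℤ) → ℝ}, 0 < H → 0 < t →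
      (∀ m ∈ S, s m ∈ Ico 0 L ∧ polarCurve Ω n t (s m) ∈ gridBox H m) →
      (S.card : ℝ) ≤ C * (t / H + 1) := by
  obtain ⟨C, hC, hcard⟩ := b.exists_card_le_mul_sum_totalCurvature
  have hL := b.param.length_pos.le
  set k := totalCurvature γ'' L - totalCurvature γ'' 0
  have hk : 0 ≤ k := sub_nonneg.2 (b.param.monotone_totalCurvature hL)
  refine ⟨C * (k + 2), by positivity, fun {t H S s} hH ht hs => ?_⟩
  calc (S.card : ℝ) ≤ C * (t / H * k + 2) := by
        simpa using hcard (T := {()}) (u := fun _ => 0) (v := fun _ => L) hH ht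
          (fun m hm => (hs m hm).2) (by simpa using hL)
          (by simpa using fun m hm => Ico_subset_Icc_self (hs m hm).1)
    _ ≤ C * (k + 2) * (t / H + 1) := by
        have : 0 ≤ C * (k + 2 * (t / H)) := by positivity
        linarith

open Classical in
lemma exists_card_filter_nearlyRational_le (b : CurvedBoundary Ω γ γ' γ'' n L a r R) {g : ℝ}
    (hg : 0 ≤ g) (hint : IntegrableOn (fun v => logWeight g ‖γ'' v‖) (Icc 0 L)) :
    ∃ C, 0 < C ∧ ∀ {t : ℝ} {N : ℕ} {S : Finset (Fin 2 → ℤ)} {s : (Fin 2 → ℤ) → ℝ},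
      0 < N → 0 < t → (∀ m ∈ S, s m ∈ Ico 0 L ∧ polarCurve Ω n t (s m) ∈ gridBox (N ^ 6) m) →
      ((S.filter fun m => IsNearlyRational N (R / (N : ℝ) ^ 5) (γ (s m))).card : ℝ) ≤
        C * (t / (N : ℝ) ^ 6 * (1 / (N : ℝ) ^ 2 + Real.log (2 + N) ^ (-g)) + (N : ℝ) ^ 2) := by
  obtain ⟨C₁, hC₁, hcard⟩ := b.exists_card_le_mul_sum_totalCurvature
  obtain ⟨C₂, hC₂, hcells⟩ := b.exists_finset_forall_nearlyRational
  have hL := b.param.length_pos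
  set I := ∫ v in 0..L, logWeight g ‖γ'' v‖
  have hI : 0 ≤ I :=
    intervalIntegral.integral_nonneg hL.le fun v _ => logWeight_nonneg g (norm_nonneg _)
  refine ⟨C₁ * (C₂ * L + I + 2 * C₂), by positivity, fun {t N S s} hN ht hs => ?_⟩
  obtain ⟨T, hTM, hTcard, hT⟩ := hcells hN (pow_pos hN 5)
  rw [Nat.cast_pow] at hT
  have hlog : 0 ≤ Real.log (2 + N) ^ (-g) :=
    Real.rpow_nonneg (Real.log_nonneg (by linarith [N.cast_nonneg (α := ℝ)])) _
  have hcurv := b.param.sum_totalCurvature_sub_le hg N.cast_nonneg hint (pow_pos hN 5) hTM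
  have hS := hcard (pow_pos hN 6) ht (fun m hm => (hs m (Finset.mem_filter.1 hm).1).2)
    (fun j _ => monotone_divisionPoint hL.le (N ^ 5) j.le_succ)
    fun m hm => hT (s m) (hs m (Finset.mem_filter.1 hm).1).1 (Finset.mem_filter.1 hm).2
  rw [Finset.sum_add_distrib, ← Finset.mul_sum, Finset.sum_const, nsmul_eq_mul] at hS
  push_cast at hS hcurv
  set ℓ := Real.log (2 + N) ^ (-g)
  calc ((S.filter fun m => IsNearlyRational N (R / (N : ℝ) ^ 5) (γ (s m))).card : ℝ)
      ≤ C₁ * (t / (N : ℝ) ^ 6 * (C₂ * (N : ℝ) ^ 2 * (N * (L / (N : ℝ) ^ 5)) + ℓ * I) +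
          C₂ * (N : ℝ) ^ 2 * 2) := by
        refine hS.trans ?_
        gcongr
        refine hcurv.trans ?_
        gcongr
    _ = C₁ * (t / (N : ℝ) ^ 6 * (C₂ * L * (1 / (N : ℝ) ^ 2) + I * ℓ) +
          2 * C₂ * (N : ℝ) ^ 2) := by
        field_simp
    _ ≤ C₁ * (C₂ * L + I + 2 * C₂) *
          (t / (N : ℝ) ^ 6 * (1 / (N : ℝ) ^ 2 + ℓ) + (N : ℝ) ^ 2) := by
        rw [← sub_nonneg]
        have : 0 ≤ C₁ * (t / (N : ℝ) ^ 6 * ((I + 2 * C₂) * (1 / (N : ℝ) ^ 2) +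
          (C₂ * L + 2 * C₂) * ℓ) + (C₂ * L + I) * (N : ℝ) ^ 2) := by positivity
        linarith

lemma exists_pow_mul_card_le (b : CurvedBoundary Ω γ γ' γ'' n L a r R) :
    ∃ C, 0 < C ∧ ∀ {t : ℝ} {N : ℕ} {S : Finset (Fin 2 → ℤ)} {s : (Fin 2 → ℤ) → ℝ},
      0 < N → (N : ℝ) ^ 13 ≤ t →
      (∀ m ∈ S, s m ∈ Ico 0 L ∧ polarCurve Ω n t (s m) ∈ gridBox (N ^ 6) m) →
      (N : ℝ) ^ 5 * S.card ≤ C * (t / N) := by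
  obtain ⟨C, hC, hcard⟩ := b.exists_card_le
  refine ⟨2 * C, by positivity, fun {t N S s} hN hNt hs => ?_⟩
  have ht : 0 < t := lt_of_lt_of_le (by positivity) hNt
  calc (N : ℝ) ^ 5 * S.card ≤ (N : ℝ) ^ 5 * (C * (t / (N ^ 6 : ℕ) + 1)) := by
        gcongr
        exact hcard (pow_pos hN 6) ht hs
    _ = C * (t / N + (N : ℝ) ^ 5) := by
        push_cast
        field_simp
    _ ≤ C * (t / N + t / N) := by
        gcongr
        exact pow_le_div_of_pow_le hN hNt (by norm_num)
    _ = 2 * C * (t / N) := by ring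

open Classical in
lemma exists_pow_mul_card_filter_nearlyRational_le (b : CurvedBoundary Ω γ γ' γ'' n L a r R)
    {g : ℝ} (hg : 0 ≤ g) (hint : IntegrableOn (fun v => logWeight g ‖γ'' v‖) (Icc 0 L)) :
    ∃ C, 0 < C ∧ ∀ {t : ℝ} {N : ℕ} {S : Finset (Fin 2 → ℤ)} {s : (Fin 2 → ℤ) → ℝ},
      0 < N → (N : ℝ) ^ 13 ≤ t →
      (∀ m ∈ S, s m ∈ Ico 0 L ∧ polarCurve Ω n t (s m) ∈ gridBox (N ^ 6) m) →
      (N : ℝ) ^ 6 * (S.filter fun m => IsNearlyRational N (R / (N : ℝ) ^ 5) (γ (s m))).card ≤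
        C * (t * (1 / N + Real.log (2 + N) ^ (-g))) := by
  obtain ⟨C, hC, hcard⟩ := b.exists_card_filter_nearlyRational_le hg hint
  refine ⟨2 * C, by positivity, fun {t N S s} hN hNt hs => ?_⟩
  have hN1 : (1 : ℝ) ≤ N := by exact_mod_cast hN
  have ht : 0 < t := lt_of_lt_of_le (by positivity) hNt
  have hlog : 0 ≤ Real.log (2 + N) ^ (-g) :=
    Real.rpow_nonneg (Real.log_nonneg (by linarith)) _
  set ℓ := Real.log (2 + N) ^ (-g)
  have hpow : (N : ℝ) ^ 8 ≤ t * (1 / N + ℓ) := by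
    calc (N : ℝ) ^ 8 ≤ t / N := pow_le_div_of_pow_le hN hNt (by norm_num)
      _ ≤ t * (1 / N + ℓ) := by
          rw [div_eq_mul_one_div]
          gcongr
          exact le_add_of_nonneg_right hlog
  calc (N : ℝ) ^ 6 * (S.filter fun m => IsNearlyRational N (R / (N : ℝ) ^ 5) (γ (s m))).card
      ≤ (N : ℝ) ^ 6 * (C * (t / (N : ℝ) ^ 6 * (1 / (N : ℝ) ^ 2 + ℓ) + (N : ℝ) ^ 2)) := by
        gcongr
        exact hcard hN ht hs
    _ = C * (t * (1 / (N : ℝ) ^ 2 + ℓ) + (N : ℝ) ^ 8) := by field_simp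
    _ ≤ C * (t * (1 / N + ℓ) + t * (1 / N + ℓ)) := by
        gcongr
        exact le_self_pow₀ hN1 two_ne_zero
    _ = 2 * C * (t * (1 / N + ℓ)) := by ring

lemma exists_abs_latticeRest_le (b : CurvedBoundary Ω γ γ' γ'' n L a r R) {g : ℝ}
    (hg : 0 ≤ g) (hint : IntegrableOn (fun v => logWeight g ‖γ'' v‖) (Icc 0 L)) :
    ∃ C, 0 < C ∧ ∀ {t : ℝ} {N : ℕ}, 0 < N → (N : ℝ) ^ 13 ≤ t →
      |latticeRest (polarSet Ω) t| ≤ C * t * (1 / N + Real.log (2 + N) ^ (-g)) := by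
  classical
  obtain ⟨C₁, hC₁, hrest⟩ := b.exists_abs_latticeRest_le_card
  obtain ⟨C₂, hC₂, hall⟩ := b.exists_pow_mul_card_le
  obtain ⟨C₃, hC₃, hrational⟩ := b.exists_pow_mul_card_filter_nearlyRational_le hg hint
  refine ⟨C₁ * (C₂ + C₃), by positivity, fun {t N} hN hNt => ?_⟩
  have ht : 0 < t := lt_of_lt_of_le (by positivity) hNt
  have hlog : 0 ≤ Real.log (2 + N) ^ (-g) :=
    Real.rpow_nonneg (Real.log_nonneg (by linarith [N.cast_nonneg (α := ℝ)])) _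
  obtain ⟨S, s, hs, hle⟩ := hrest hN hNt
  set ℓ := Real.log (2 + N) ^ (-g)
  calc |latticeRest (polarSet Ω) t|
      ≤ C₁ * (C₂ * (t / N) + C₃ * (t * (1 / N + ℓ))) :=
        hle.trans (mul_le_mul_of_nonneg_left
          (add_le_add (hall hN hNt hs) (hrational hN hNt hs)) hC₁.le)
    _ = C₁ * (C₂ * (t * (1 / N + 0)) + C₃ * (t * (1 / N + ℓ))) := by ring
    _ ≤ C₁ * (C₂ * (t * (1 / N + ℓ)) + C₃ * (t * (1 / N + ℓ))) := by gcongr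
    _ = C₁ * (C₂ + C₃) * t * (1 / N + ℓ) := by ring

end CurvedBoundary

/-! ### The choice of scale -/

lemma inv_le_mul_log_rpow_neg {g : ℝ} (hg : 0 < g) {N : ℕ} (hN : 0 < N) :
    1 / (N : ℝ) ≤ 3 * g ^ g * Real.log (2 + N) ^ (-g) := by
  have hN1 : (1 : ℝ) ≤ N := by exact_mod_cast hN
  have hlog : 0 < Real.log (2 + N) := Real.log_pos (by linarith)
  have hroot : Real.log (2 + N) ≤ (2 + (N : ℝ)) ^ (1 / g) * g := by
    have h := Real.log_le_rpow_div (by positivity : (0 : ℝ) ≤ 2 + N) (one_div_pos.2 hg)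
    rwa [div_div_eq_mul_div, div_one] at h
  rw [Real.rpow_neg hlog.le, ← div_eq_mul_inv,
    div_le_div_iff₀ (by positivity) (by positivity), one_mul]
  calc Real.log (2 + N) ^ g ≤ ((2 + (N : ℝ)) ^ (1 / g) * g) ^ g := by gcongr
    _ = (2 + N) * g ^ g := by
        rw [Real.mul_rpow (by positivity) hg.le, ← Real.rpow_mul (by positivity),
          one_div_mul_cancel hg.ne', Real.rpow_one]
    _ ≤ 3 * N * g ^ g := by
        gcongr
        linarith
    _ = 3 * g ^ g * N := by ring

lemma exists_pow_le_le_pow {t : ℝ} (ht : 1 ≤ t) {m : ℕ} (hm : m ≠ 0) :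
    ∃ N : ℕ, 0 < N ∧ (N : ℝ) ^ m ≤ t ∧ t ≤ (2 + (N : ℝ)) ^ m := by
  have ht0 : 0 ≤ t := by linarith
  have hroot : (t ^ (m : ℝ)⁻¹) ^ m = t := Real.rpow_inv_natCast_pow ht0 hm
  refine ⟨⌊t ^ (m : ℝ)⁻¹⌋₊, Nat.floor_pos.2 (Real.one_le_rpow ht (by positivity)), ?_, ?_⟩
  · calc (⌊t ^ (m : ℝ)⁻¹⌋₊ : ℝ) ^ m ≤ (t ^ (m : ℝ)⁻¹) ^ m := by
          gcongr
          exact Nat.floor_le (by positivity)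
      _ = t := hroot
  · calc t = (t ^ (m : ℝ)⁻¹) ^ m := hroot.symm
      _ ≤ (2 + (⌊t ^ (m : ℝ)⁻¹⌋₊ : ℝ)) ^ m := by
          gcongr
          linarith [Nat.lt_floor_add_one (t ^ (m : ℝ)⁻¹)]

lemma log_rpow_neg_le_of_le_pow {g t x : ℝ} (hg : 0 ≤ g) {m : ℕ} (hm : m ≠ 0) (ht : 1 < t)
    (htx : t ≤ x ^ m) : Real.log x ^ (-g) ≤ (m : ℝ) ^ g * Real.log t ^ (-g) := by
  have hlog : 0 < Real.log t := Real.log_pos ht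
  have hle : Real.log t / m ≤ Real.log x := by
    rw [div_le_iff₀' (by positivity), ← Real.log_pow]
    exact Real.log_le_log (by linarith) htx
  calc Real.log x ^ (-g) ≤ (Real.log t / m) ^ (-g) :=
        Real.rpow_le_rpow_of_nonpos (by positivity) hle (by linarith)
    _ = (m : ℝ) ^ g * Real.log t ^ (-g) := by
        rw [Real.div_rpow hlog.le m.cast_nonneg, Real.rpow_neg m.cast_nonneg, div_inv_eq_mul,
          mul_comm]

lemma log_rpow_neg_le_log_two_rpow_mul {g h t : ℝ} (hh : h ≤ g) (ht : 2 ≤ t) :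
    Real.log t ^ (-g) ≤ Real.log 2 ^ (h - g) * Real.log t ^ (-h) := by
  have hlog : 0 < Real.log t := Real.log_pos (by linarith)
  calc Real.log t ^ (-g) = Real.log t ^ (h - g) * Real.log t ^ (-h) := by
        rw [← Real.rpow_add hlog]
        ring_nf
    _ ≤ Real.log 2 ^ (h - g) * Real.log t ^ (-h) := by
        gcongr ?_ * _
        exact Real.rpow_le_rpow_of_nonpos (Real.log_pos one_lt_two)
          (Real.log_le_log two_pos ht) (by linarith)

theorem statement8_general (Ω : Set E2) (hconv : Convex ℝ Ω) (hopen : IsOpen Ω)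
    (hbdd : Bornology.IsBounded Ω) (h0 : (0 : E2) ∈ Ω)
    (γ γ' γ'' : ℝ → E2) (L : ℝ) (hbp : BoundaryParam Ω γ γ' γ'' L)
    (a g : ℝ) (ha : 0 < a) (hg : 0 < g)
    (hlow : ∀ᵐ t ∂(volume.restrict (Set.Icc 0 L)), a ≤ ‖γ'' t‖)
    (hLlogL : IntegrableOn
      (fun t => ‖γ'' t‖ * Real.log (2 + ‖γ'' t‖) ^ g) (Set.Icc 0 L)) :
    ∃ C : ℝ, 0 < C ∧ ∀ t : ℝ, 2 ≤ t →
      |latticeRest (polarSet Ω) t| ≤ C * t * Real.log t ^ (-g) := by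
  obtain ⟨n, r, R, b⟩ := exists_curvedBoundary hconv hopen hbdd h0 hbp ha hlow
  obtain ⟨C, hC, hrest⟩ := b.exists_abs_latticeRest_le hg.le hLlogL
  refine ⟨C * (3 * g ^ g + 1) * 13 ^ g, by positivity, fun t ht => ?_⟩
  obtain ⟨N, hN, hNt, htN⟩ := exists_pow_le_le_pow (by linarith : 1 ≤ t) (m := 13) (by norm_num)
  calc |latticeRest (polarSet Ω) t|
      ≤ C * t * (1 / N + Real.log (2 + N) ^ (-g)) := hrest hN hNt
    _ ≤ C * t * (3 * g ^ g * Real.log (2 + N) ^ (-g) + Real.log (2 + N) ^ (-g)) := by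
        gcongr
        exact inv_le_mul_log_rpow_neg hg hN
    _ = C * (3 * g ^ g + 1) * t * Real.log (2 + N) ^ (-g) := by ring
    _ ≤ C * (3 * g ^ g + 1) * t * (13 ^ g * Real.log t ^ (-g)) := by
        gcongr
        exact_mod_cast log_rpow_neg_le_of_le_pow hg.le (by norm_num) (by linarith) htN
    _ = C * (3 * g ^ g + 1) * 13 ^ g * t * Real.log t ^ (-g) := by ring

/-- Proposition 5.1: if `Ω` is a bounded open convex planar domain containing
the origin, with `C¹` boundary, absolutely continuous unit tangent, curvature
`κ = ‖γ''‖ ≥ a > 0` a.e. and `κ ∈ L log^γ L(∂Ω)`, then the lattice rest of the polar set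
satisfies `|E_{Ω*}(t)| ≤ C t (log t)^{−γ/2}` for all `t ≥ 2`. -/
theorem statement8 (Ω : Set E2) (hconv : Convex ℝ Ω) (hopen : IsOpen Ω)
    (hbdd : Bornology.IsBounded Ω) (h0 : (0 : E2) ∈ Ω)
    (γ γ' γ'' : ℝ → E2) (L : ℝ) (hbp : BoundaryParam Ω γ γ' γ'' L)
    (a g : ℝ) (ha : 0 < a) (hg : 0 < g)
    (hlow : ∀ᵐ t ∂(volume.restrict (Set.Icc 0 L)), a ≤ ‖γ'' t‖)
    (hLlogL : IntegrableOn
      (fun t => ‖γ'' t‖ * Real.log (2 + ‖γ'' t‖) ^ g) (Set.Icc 0 L)) :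
    ∃ C : ℝ, ∀ t : ℝ, 2 ≤ t →
      |latticeRest (polarSet Ω) t| ≤ C * t * Real.log t ^ (-(g / 2)) := by
  obtain ⟨C, hC, h⟩ :=
    statement8_general Ω hconv hopen hbdd h0 γ γ' γ'' L hbp a g ha hg hlow hLlogL
  refine ⟨C * Real.log 2 ^ (g / 2 - g), fun t ht => (h t ht).trans ?_⟩
  rw [mul_right_comm C _ t, mul_assoc (C * t)]
  gcongr
  exact log_rpow_neg_le_log_two_rpow_mul (half_le_self hg.le) ht

end
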